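/- arXiv:2308.13107 — 2 statements merged into one kernel-verified Lean document; each statement's English description precedes it below -/
import Mathlib

section
/- If a set of exactly 6 points in the Euclidean plane spans at most 3 distinct triangles, then the 6 points are the vertex set of a regular hexagon. -/
open Real EuclideanGeometry

noncomputable section

/-- The Euclidean plane. -/
abbrev Plane : Type := EuclideanSpace ℝ (Fin 2)

/-- A point of the plane from coordinates. -/
def pt (x y : ℝ) : Plane := (WithLp.equiv 2 (Fin 2 → ℝ)).symm ![x, y]

/-- Two sets of points in the plane are congruent if some isometry of `ℝ²`
maps one onto the other. -/
def Cong (S T : Set Plane) : Prop := ∃ f : Plane ≃ᵢ Plane, f '' S = T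

/-- The collection of unordered triples of pairwise distinct points of `P`. -/
def triplesOf (P : Set Plane) : Set (Set Plane) :=
  {s | ∃ a b c : Plane, a ∈ P ∧ b ∈ P ∧ c ∈ P ∧ a ≠ b ∧ a ≠ c ∧ b ≠ c ∧ s = {a, b, c}}

/-- The number of congruence classes of unordered triples of pairwise distinct
points of `P` (i.e. the number of distinct triangles spanned by `P`),
as an extended natural number. -/
def numTriangles (P : Set Plane) : ℕ∞ :=
  ((fun t => {t' ∈ triplesOf P | Cong t t'}) '' triplesOf P).encard

/-- A regular hexagon: six equally spaced points on a circle. -/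
def IsRegularHexagon (S : Set Plane) : Prop :=
  ∃ (c : Plane) (r φ : ℝ), 0 < r ∧
    S = Set.range fun k : Fin 6 =>
      c + r • pt (Real.cos (φ + 2 * π * k / 6)) (Real.sin (φ + 2 * π * k / 6))

/-!
The type of a triangle is the multiset of its side lengths, so `P` has at most three types.

Suppose first that no triangle is equilateral. The distances from a point `x` of `P` to the others
are not all distinct, since three types involve at most nine pairs of distances and five distances
have ten. On the other hand no distance from `x` can occur three times, nor can two distances occur
twice each, nor can a single distance occur exactly twice: each possibility forces either a fourth
type or three points on two circles.

So `P` contains an equilateral triangle. By pigeonhole every other point of `P` is equidistant from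
two of its vertices, hence lies on one of its axes; let `s` be its parameter there, with `0` at the
centre and `1` at the vertex. In units of the squared circumradius, its squared distances to the
vertices are `(s - 1) ^ 2`, `s ^ 2 + s + 1` and `s ^ 2 + s + 1`, and the squared side of the
triangle is `3`. Comparing types excludes `s = 0` and `s = -2`; then the types are `{3, 3, 3}`,
`{3, s ^ 2 + s + 1, s ^ 2 + s + 1}` and `{3, s ^ 2 + s + 1, (s - 1) ^ 2}`, so `s` is the same for
all the remaining points. Three of them then lie on the three different axes and form an equilateral
triangle with squared side `3 * s ^ 2`, which must be `3`, so `s = -1`: the points are the vertices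
of the triangle and their antipodes.
-/

section Triples

variable {α : Type*}

theorem multiset_triple_eq_triple_iff {a b c a' b' c' : α} :
    ({a, b, c} : Multiset α) = {a', b', c'} ↔
      (a = a' ∧ b = b' ∧ c = c') ∨ (a = a' ∧ b = c' ∧ c = b') ∨
      (a = b' ∧ b = a' ∧ c = c') ∨ (a = b' ∧ b = c' ∧ c = a') ∨
      (a = c' ∧ b = a' ∧ c = b') ∨ (a = c' ∧ b = b' ∧ c = a') := by
  classical
  constructor
  · intro h
    have hcount (x : α) : Multiset.count x {a, b, c} = Multiset.count x {a', b', c'} := by rw [h]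
    simp only [Multiset.insert_eq_cons, Multiset.count_cons, Multiset.count_singleton] at hcount
    grind [hcount a, hcount b, hcount c]
  · simp only [Multiset.insert_eq_cons, ← Multiset.singleton_add]
    rintro (⟨rfl, rfl, rfl⟩ | ⟨rfl, rfl, rfl⟩ | ⟨rfl, rfl, rfl⟩ | ⟨rfl, rfl, rfl⟩ |
      ⟨rfl, rfl, rfl⟩ | ⟨rfl, rfl, rfl⟩) <;> simp only [add_comm, add_left_comm, add_assoc]

theorem exists_eq_of_encard_le_three {S : Set α} (hS : S.encard ≤ 3) {x y z w : α}
    (hx : x ∈ S) (hy : y ∈ S) (hz : z ∈ S) (hw : w ∈ S) :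
    x = y ∨ x = z ∨ x = w ∨ y = z ∨ y = w ∨ z = w := by
  by_contra! hne
  have hsub : {x, y, z, w} ⊆ S := by simp [Set.insert_subset_iff, *]
  have hcard : ({x, y, z, w} : Set α).encard = 4 := by
    rw [Set.encard_insert_of_notMem (by grind),
      Set.encard_eq_three.mpr ⟨y, z, w, by grind, by grind, by grind, rfl⟩]
    norm_num
  have hle : (4 : ℕ∞) ≤ 3 := hcard ▸ (Set.encard_le_encard hsub).trans hS
  exact absurd hle (by decide)

theorem eq_or_eq_or_eq_of_encard_le_three {S : Set α} (hS : S.encard ≤ 3) {x y z : α}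
    (hx : x ∈ S) (hy : y ∈ S) (hz : z ∈ S) (hxy : x ≠ y) (hxz : x ≠ z) (hyz : y ≠ z) :
    ∀ w ∈ S, w = x ∨ w = y ∨ w = z := by
  intro w hw
  grind [exists_eq_of_encard_le_three hS hx hy hz hw]

end Triples

/-- The congruence types of the triangles with vertices in `P`, a triangle being recorded by the
multiset of its three side lengths. -/
def triangleTypes {X : Type*} [Dist X] (P : Set X) : Set (Multiset ℝ) :=
  {m | ∃ a ∈ P, ∃ b ∈ P, ∃ c ∈ P, a ≠ b ∧ a ≠ c ∧ b ≠ c ∧ m = {dist a b, dist a c, dist b c}}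

section TriangleTypes

variable {X : Type*} [PseudoMetricSpace X]

theorem mem_triangleTypes {P : Set X} {a b c : X} (ha : a ∈ P) (hb : b ∈ P) (hc : c ∈ P)
    (hab : a ≠ b) (hac : a ≠ c) (hbc : b ≠ c) :
    {dist a b, dist a c, dist b c} ∈ triangleTypes P :=
  ⟨a, ha, b, hb, c, hc, hab, hac, hbc, rfl⟩

theorem sides_eq_of_triple_eq {a b c a' b' c' : X}
    (hab : a ≠ b) (hac : a ≠ c) (hbc : b ≠ c) (h : ({a, b, c} : Set X) = {a', b', c'}) :
    ({dist a b, dist a c, dist b c} : Multiset ℝ) = {dist a' b', dist a' c', dist b' c'} := by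
  have ha : a ∈ ({a', b', c'} : Set X) := h ▸ by simp
  have hb : b ∈ ({a', b', c'} : Set X) := h ▸ by simp
  have hc : c ∈ ({a', b', c'} : Set X) := h ▸ by simp
  simp only [Set.mem_insert_iff, Set.mem_singleton_iff] at ha hb hc
  rw [multiset_triple_eq_triple_iff]
  rcases ha with rfl | rfl | rfl <;> rcases hb with rfl | rfl | rfl <;>
    rcases hc with rfl | rfl | rfl <;> grind [dist_comm]

end TriangleTypes

theorem encard_triangleTypes_le_numTriangles (P : Set Plane) :
    (triangleTypes P).encard ≤ numTriangles P := by
  choose! A hA B hB C hC hAB hAC hBC hm using fun m (hm : m ∈ triangleTypes P) => hm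
  have hmem (m) (h : m ∈ triangleTypes P) : {A m, B m, C m} ∈ triplesOf P :=
    ⟨A m, B m, C m, hA m h, hB m h, hC m h, hAB m h, hAC m h, hBC m h, rfl⟩
  refine Set.encard_le_encard_of_injOn
    (f := fun m => {t ∈ triplesOf P | Cong {A m, B m, C m} t})
    (fun m h => Set.mem_image_of_mem _ (hmem m h)) fun m h m' h' heq => ?_
  obtain ⟨-, f, hf⟩ : {A m', B m', C m'} ∈ triplesOf P ∧ Cong {A m, B m, C m} {A m', B m', C m'} :=
    (Set.ext_iff.mp heq _).mpr ⟨hmem m' h', IsometryEquiv.refl _, Set.image_id _⟩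
  rw [Set.image_insert_eq, Set.image_pair] at hf
  have hsides := sides_eq_of_triple_eq (f.injective.ne (hAB m h)) (f.injective.ne (hAC m h))
    (f.injective.ne (hBC m h)) hf
  simpa only [f.dist_eq, ← hm m h, ← hm m' h'] using hsides

theorem exists_mem_notMem_of_six_le_encard {α : Type*} {S : Set α} (hS : 6 ≤ S.encard)
    (F : Finset α) (hF : F.card ≤ 5) : ∃ z ∈ S, z ∉ F := by
  by_contra! h
  have hle : (6 : ℕ∞) ≤ F.card :=
    hS.trans ((Set.encard_le_encard h).trans_eq (Set.encard_coe_eq_coe_finsetCard F))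
  have : 6 ≤ F.card := by exact_mod_cast hle
  omega

theorem card_le_four_of_pairs_mem {α : Type*} {S : Set (Multiset α)} (hS : S.encard ≤ 3)
    (hcard : ∀ m ∈ S, m.card ≤ 3) {D : Finset α}
    (hD : ∀ a ∈ D, ∀ b ∈ D, a ≠ b → ∃ m ∈ S, a ∈ m ∧ b ∈ m) : D.card ≤ 4 := by
  classical
  lift S to Finset (Multiset α) using Set.finite_of_encard_le_coe (k := 3) hS
  replace hS : S.card ≤ 3 := by
    rw [Set.encard_coe_eq_coe_finsetCard] at hS
    exact_mod_cast hS
  have hcover : D.powersetCard 2 ⊆ S.biUnion fun m => m.toFinset.powersetCard 2 := by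
    intro p hp
    obtain ⟨hpD, hp₂⟩ := Finset.mem_powersetCard.mp hp
    obtain ⟨a, b, hab, rfl⟩ := Finset.card_eq_two.mp hp₂
    obtain ⟨m, hm, ham, hbm⟩ := hD a (hpD (by simp)) b (hpD (by simp)) hab
    refine Finset.mem_biUnion.mpr ⟨m, hm, Finset.mem_powersetCard.mpr ⟨?_, hp₂⟩⟩
    simp [Finset.insert_subset_iff, ham, hbm]
  have hpairs (m) (hm : m ∈ S) : (m.toFinset.powersetCard 2).card ≤ 3 := by
    rw [Finset.card_powersetCard]
    exact Nat.choose_mono 2 (m.toFinset_card_le.trans (hcard m hm))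
  have hchoose : D.card.choose 2 ≤ 9 := by
    calc D.card.choose 2 = (D.powersetCard 2).card := (Finset.card_powersetCard 2 D).symm
      _ ≤ S.card * 3 :=
        (Finset.card_le_card hcover).trans (Finset.card_biUnion_le_card_mul _ _ _ hpairs)
      _ ≤ 9 := Nat.mul_le_mul_right 3 hS
  by_contra! hlt
  have := Nat.choose_mono 2 hlt
  norm_num [Nat.choose] at this
  omega

theorem exists_dist_eq_dist {X : Type*} [PseudoMetricSpace X] {P : Set X} (hP : 6 ≤ P.encard)
    (hT : (triangleTypes P).encard ≤ 3) {x : X} (hx : x ∈ P) :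
    ∃ y ∈ P, ∃ z ∈ P, x ≠ y ∧ x ≠ z ∧ y ≠ z ∧ dist x y = dist x z := by
  by_contra! hne
  have hinj : Set.InjOn (dist x) (P \ {x}) := fun y hy z hz hyz => by
    by_contra hyz'
    exact hne y hy.1 z hz.1 (Ne.symm hy.2) (Ne.symm hz.2) hyz' hyz
  have hfive : 5 ≤ (P \ {x}).encard := by
    rw [← Set.encard_sdiff_singleton_add_one hx] at hP
    exact (ENat.add_le_add_iff_right ENat.one_ne_top).mp hP
  obtain ⟨F, hF, hF₅⟩ := Set.exists_subset_encard_eq hfive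
  lift F to Finset X using Set.finite_of_encard_eq_coe (k := 5) hF₅
  have hcard : (F.image (dist x)).card = 5 := by
    rw [Finset.card_image_of_injOn (hinj.mono hF)]
    rw [Set.encard_coe_eq_coe_finsetCard] at hF₅
    exact_mod_cast hF₅
  have hle : (F.image (dist x)).card ≤ 4 := by
    refine card_le_four_of_pairs_mem hT ?_ ?_
    · rintro _ ⟨a, -, b, -, c, -, -, -, -, rfl⟩
      simp
    · simp only [Finset.forall_mem_image]
      intro y hy z hz hyz
      exact ⟨_, mem_triangleTypes hx (hF hy).1 (hF hz).1 (Ne.symm (hF hy).2) (Ne.symm (hF hz).2)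
        (ne_of_apply_ne _ hyz), by simp, by simp⟩
  omega

theorem leg_ne_base {S : Set (Multiset ℝ)} (hne : ∀ r, {r, r, r} ∉ S) {a s : ℝ}
    (h : {a, a, s} ∈ S) : a ≠ s :=
  fun has => hne a (by simpa [← has] using h)

theorem eq_or_eq_or_eq_of_isosceles {S : Set (Multiset ℝ)} (hS : S.encard ≤ 3)
    (hne : ∀ r, {r, r, r} ∉ S) {a s t : ℝ} (haas : {a, a, s} ∈ S) (haat : {a, a, t} ∈ S)
    (hsst : {s, s, t} ∈ S) : ∀ T ∈ S, T = {a, a, s} ∨ T = {a, a, t} ∨ T = {s, s, t} := by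
  have has : a ≠ s := leg_ne_base hne haas
  have hat : a ≠ t := leg_ne_base hne haat
  have hst : s ≠ t := leg_ne_base hne hsst
  apply eq_or_eq_or_eq_of_encard_le_three hS haas haat hsst <;>
    grind [multiset_triple_eq_triple_iff]

section FewTypes

variable {X : Type*} [MetricSpace X] {P : Set X}

theorem exists_dist_eq_dist_of_equidistant_triple (hT : (triangleTypes P).encard ≤ 3)
    (hne : ∀ r, {r, r, r} ∉ triangleTypes P) {x y₁ y₂ y₃ : X} (hmem : {x, y₁, y₂, y₃} ⊆ P)
    (hnd : [x, y₁, y₂, y₃].Nodup) (h₁₂ : dist x y₁ = dist x y₂) (h₁₃ : dist x y₁ = dist x y₃) :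
    dist y₁ y₂ = dist y₁ y₃ ∨ dist y₂ y₁ = dist y₂ y₃ ∨ dist y₃ y₁ = dist y₃ y₂ := by
  simp only [Set.insert_subset_iff, Set.singleton_subset_iff] at hmem
  simp only [List.nodup_cons, List.mem_cons, List.not_mem_nil, or_false, not_or] at hnd
  obtain ⟨hx, hy₁, hy₂, hy₃⟩ := hmem
  have hx₁₂ := mem_triangleTypes hx hy₁ hy₂ (by grind) (by grind) (by grind)
  have hx₁₃ := mem_triangleTypes hx hy₁ hy₃ (by grind) (by grind) (by grind)
  have hx₂₃ := mem_triangleTypes hx hy₂ hy₃ (by grind) (by grind) (by grind)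
  have hy₁₂₃ := mem_triangleTypes hy₁ hy₂ hy₃ (by grind) (by grind) (by grind)
  rw [← h₁₂] at hx₁₂
  rw [← h₁₃] at hx₁₃
  rw [← h₁₂, ← h₁₃] at hx₂₃
  by_contra! hdist
  have hpigeon := exists_eq_of_encard_le_three hT hx₁₂ hx₁₃ hx₂₃ hy₁₂₃
  simp only [multiset_triple_eq_triple_iff] at hpigeon
  grind [dist_comm, leg_ne_base hne hx₁₂, leg_ne_base hne hx₁₃, leg_ne_base hne hx₂₃]

theorem distances_mem_triangleTypes (hT : (triangleTypes P).encard ≤ 3) {x y₁ y₂ p q r : X}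
    (hmem : {x, y₁, y₂, p, q, r} ⊆ P) (hnd : [x, y₁, y₂, p, q, r].Nodup)
    (h : dist x y₁ = dist x y₂)
    (hdist : [dist x y₁, dist x p, dist x q, dist x r].Nodup) :
    {dist x p, dist x q, dist x r} ∈ triangleTypes P := by
  simp only [Set.insert_subset_iff, Set.singleton_subset_iff] at hmem
  simp only [List.nodup_cons, List.mem_cons, List.not_mem_nil, or_false, not_or] at hnd hdist
  obtain ⟨hx, hy₁, hy₂, hp, hq, hr⟩ := hmem
  have hyy := mem_triangleTypes hx hy₁ hy₂ (by grind) (by grind) (by grind)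
  have hpq := mem_triangleTypes hx hp hq (by grind) (by grind) (by grind)
  have hpr := mem_triangleTypes hx hp hr (by grind) (by grind) (by grind)
  have hqr := mem_triangleTypes hx hq hr (by grind) (by grind) (by grind)
  have hpigeon := exists_eq_of_encard_le_three hT hyy hpq hpr hqr
  simp only [multiset_triple_eq_triple_iff] at hpigeon
  have hside : dist p q = dist x r ∨ dist p r = dist x q := by grind
  rcases hside with hside | hside
  · rwa [hside] at hpq
  · rwa [hside, Multiset.insert_eq_cons, Multiset.pair_comm] at hpr

theorem base_eq_base_of_ne (hT : (triangleTypes P).encard ≤ 3)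
    (hne : ∀ r, {r, r, r} ∉ triangleTypes P) {x y₁ y₂ z₁ z₂ w : X}
    (hmem : {x, y₁, y₂, z₁, z₂, w} ⊆ P) (hnd : [x, y₁, y₂, z₁, z₂, w].Nodup)
    (hy : dist x y₁ = dist x y₂) (hz : dist x z₁ = dist x z₂)
    (hdist : [dist x y₁, dist x z₁, dist x w].Nodup)
    (hyzw : {dist x y₁, dist x z₁, dist x w} ∈ triangleTypes P)
    (hbase_ne : dist z₁ z₂ ≠ dist x w) : dist y₁ y₂ = dist z₁ z₂ := by
  simp only [Set.insert_subset_iff, Set.singleton_subset_iff] at hmem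
  simp only [List.nodup_cons, List.mem_cons, List.not_mem_nil, or_false, not_or] at hnd hdist
  obtain ⟨hx, hy₁, hy₂, hz₁, hz₂, hw⟩ := hmem
  have hyy := mem_triangleTypes hx hy₁ hy₂ (by grind) (by grind) (by grind)
  have hzz := mem_triangleTypes hx hz₁ hz₂ (by grind) (by grind) (by grind)
  rw [← hy] at hyy
  rw [← hz] at hzz
  have hyne := leg_ne_base hne hyy
  have hzne := leg_ne_base hne hzz
  have htypes := eq_or_eq_or_eq_of_encard_le_three hT hyy hzz hyzw
    (by grind [multiset_triple_eq_triple_iff]) (by grind [multiset_triple_eq_triple_iff])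
    (by grind [multiset_triple_eq_triple_iff])
  have hwz₁ := htypes _ (mem_triangleTypes hx hw hz₁ (by grind) (by grind) (by grind))
  have hwz₂ := htypes _ (mem_triangleTypes hx hw hz₂ (by grind) (by grind) (by grind))
  have hwzz := htypes _ (mem_triangleTypes hw hz₁ hz₂ (by grind) (by grind) (by grind))
  simp only [multiset_triple_eq_triple_iff] at hwz₁ hwz₂ hwzz
  replace hwz₁ : dist w z₁ = dist x y₁ := by grind
  replace hwz₂ : dist w z₂ = dist x y₁ := by grind
  simp only [hwz₁, hwz₂] at hwzz
  grind

theorem distances_notMem_triangleTypes (hT : (triangleTypes P).encard ≤ 3)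
    (hne : ∀ r, {r, r, r} ∉ triangleTypes P) {x y₁ y₂ z₁ z₂ w : X}
    (hmem : {x, y₁, y₂, z₁, z₂, w} ⊆ P) (hnd : [x, y₁, y₂, z₁, z₂, w].Nodup)
    (hy : dist x y₁ = dist x y₂) (hz : dist x z₁ = dist x z₂)
    (hdist : [dist x y₁, dist x z₁, dist x w].Nodup) :
    {dist x y₁, dist x z₁, dist x w} ∉ triangleTypes P := by
  intro hyzw
  have hzyw : {dist x z₁, dist x y₁, dist x w} ∈ triangleTypes P := by
    rwa [Multiset.insert_eq_cons, Multiset.insert_eq_cons, Multiset.cons_swap]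
  have hbase_of_ne := base_eq_base_of_ne hT hne hmem hnd hy hz hdist hyzw
  have hbase_of_ne' := base_eq_base_of_ne hT hne (y₁ := z₁) (y₂ := z₂) (z₁ := y₁) (z₂ := y₂)
    (by grind) (by grind) hz hy (by grind) hzyw
  have hbase : dist y₁ y₂ = dist z₁ z₂ := by grind
  simp only [Set.insert_subset_iff, Set.singleton_subset_iff] at hmem
  simp only [List.nodup_cons, List.mem_cons, List.not_mem_nil, or_false, not_or] at hnd hdist
  obtain ⟨hx, hy₁, hy₂, hz₁, hz₂, -⟩ := hmem
  have hyy := mem_triangleTypes hx hy₁ hy₂ (by grind) (by grind) (by grind)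
  have hzz := mem_triangleTypes hx hz₁ hz₂ (by grind) (by grind) (by grind)
  rw [← hy] at hyy
  rw [← hz] at hzz
  have hyne := leg_ne_base hne hyy
  have hzne := leg_ne_base hne hzz
  have htypes := eq_or_eq_or_eq_of_encard_le_three hT hyy hzz hyzw
    (by grind [multiset_triple_eq_triple_iff]) (by grind [multiset_triple_eq_triple_iff])
    (by grind [multiset_triple_eq_triple_iff])
  have hyz₁ := htypes _ (mem_triangleTypes hx hy₁ hz₁ (by grind) (by grind) (by grind))
  have hyz₂ := htypes _ (mem_triangleTypes hx hy₁ hz₂ (by grind) (by grind) (by grind))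
  have hyzz := htypes _ (mem_triangleTypes hy₁ hz₁ hz₂ (by grind) (by grind) (by grind))
  simp only [multiset_triple_eq_triple_iff] at hyz₁ hyz₂ hyzz
  replace hyz₁ : dist y₁ z₁ = dist x w := by grind
  replace hyz₂ : dist y₁ z₂ = dist x w := by grind
  simp only [hyz₁, hyz₂] at hyzz
  grind

theorem eq_or_eq_or_eq_of_distances_notMem (hT : (triangleTypes P).encard ≤ 3) {x y z w : X}
    (hmem : {x, y, z, w} ⊆ P) (hnd : [x, y, z, w].Nodup)
    (hdist : [dist x y, dist x z, dist x w].Nodup)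
    (hyzw : {dist x y, dist x z, dist x w} ∉ triangleTypes P) :
    ∀ T ∈ triangleTypes P, T = {dist x y, dist x w, dist y w} ∨
      T = {dist x z, dist x w, dist z w} ∨ T = {dist x y, dist x z, dist y z} := by
  simp only [Set.insert_subset_iff, Set.singleton_subset_iff] at hmem
  simp only [List.nodup_cons, List.mem_cons, List.not_mem_nil, or_false, not_or] at hnd hdist
  obtain ⟨hx, hy, hz, hw⟩ := hmem
  have hyw := mem_triangleTypes hx hy hw (by grind) (by grind) (by grind)
  have hzw := mem_triangleTypes hx hz hw (by grind) (by grind) (by grind)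
  have hyz := mem_triangleTypes hx hy hz (by grind) (by grind) (by grind)
  have hyw_ne := ne_of_mem_of_not_mem hyw hyzw
  have hzw_ne := ne_of_mem_of_not_mem hzw hyzw
  have hyz_ne := ne_of_mem_of_not_mem hyz hyzw
  simp only [ne_eq, multiset_triple_eq_triple_iff] at hyw_ne hzw_ne hyz_ne
  apply eq_or_eq_or_eq_of_encard_le_three hT hyw hzw hyz <;> grind [multiset_triple_eq_triple_iff]

theorem dist_eq_dist_of_distances_notMem (hT : (triangleTypes P).encard ≤ 3) {x y z₁ z₂ w : X}
    (hmem : {x, y, z₁, z₂, w} ⊆ P) (hnd : [x, y, z₁, z₂, w].Nodup) (hz : dist x z₁ = dist x z₂)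
    (hdist : [dist x y, dist x z₁, dist x w].Nodup)
    (hyzw : {dist x y, dist x z₁, dist x w} ∉ triangleTypes P) : dist y z₁ = dist y z₂ := by
  have htypes := eq_or_eq_or_eq_of_distances_notMem hT
    (hmem.trans' (by simp [Set.insert_subset_iff])) (by grind) hdist hyzw
  simp only [Set.insert_subset_iff, Set.singleton_subset_iff] at hmem
  simp only [List.nodup_cons, List.mem_cons, List.not_mem_nil, or_false, not_or] at hnd hdist
  obtain ⟨hx, hy, -, hz₂, -⟩ := hmem
  have hxyz₂ := mem_triangleTypes hx hy hz₂ (by grind) (by grind) (by grind)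
  rw [← hz] at hxyz₂
  have hxyz₂_ne := ne_of_mem_of_not_mem hxyz₂ hyzw
  replace hxyz₂ := htypes _ hxyz₂
  simp only [ne_eq, multiset_triple_eq_triple_iff] at hxyz₂_ne hxyz₂
  clear htypes
  grind

end FewTypes

section Planar

variable {V X : Type*} [NormedAddCommGroup V] [InnerProductSpace ℝ V] [MetricSpace X]
  [NormedAddTorsor V X] {P : Set X}

open Module

theorem eq_or_eq_or_eq_of_dist_eq_of_dist_eq (hV : finrank ℝ V = 2) {c₁ c₂ p₁ p₂ p₃ : X}
    {r₁ r₂ : ℝ} (hc : c₁ ≠ c₂)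
    (h₁₁ : dist p₁ c₁ = r₁) (h₂₁ : dist p₂ c₁ = r₁) (h₃₁ : dist p₃ c₁ = r₁)
    (h₁₂ : dist p₁ c₂ = r₂) (h₂₂ : dist p₂ c₂ = r₂) (h₃₂ : dist p₃ c₂ = r₂) :
    p₁ = p₂ ∨ p₃ = p₁ ∨ p₃ = p₂ := by
  have : FiniteDimensional ℝ V := .of_finrank_eq_succ hV
  by_cases hp : p₁ = p₂
  · exact .inl hp
  · exact .inr (EuclideanGeometry.eq_of_dist_eq_of_dist_eq_of_finrank_eq_two hV hc hp
      h₁₁ h₂₁ h₃₁ h₁₂ h₂₂ h₃₂)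

theorem dist_eq_base_of_equidistant_triple (hV : finrank ℝ V = 2)
    (hT : (triangleTypes P).encard ≤ 3) (hne : ∀ r, {r, r, r} ∉ triangleTypes P)
    {x y₁ y₂ y₃ z : X} (hmem : {x, y₁, y₂, y₃, z} ⊆ P) (hnd : [x, y₁, y₂, y₃, z].Nodup)
    (h₁₂ : dist x y₁ = dist x y₂) (h₁₃ : dist x y₁ = dist x y₃)
    (hs : dist y₁ y₂ = dist y₁ y₃) : dist z y₂ = dist y₁ y₂ ∧ dist z y₃ = dist y₁ y₂ := by
  simp only [Set.insert_subset_iff, Set.singleton_subset_iff] at hmem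
  simp only [List.nodup_cons, List.mem_cons, List.not_mem_nil, or_false, not_or] at hnd
  obtain ⟨hx, hy₁, hy₂, hy₃, hz⟩ := hmem
  have haas := mem_triangleTypes hx hy₁ hy₂ (by grind) (by grind) (by grind)
  have haat := mem_triangleTypes hx hy₂ hy₃ (by grind) (by grind) (by grind)
  have hsst := mem_triangleTypes hy₁ hy₂ hy₃ (by grind) (by grind) (by grind)
  rw [← h₁₂] at haas
  rw [← h₁₂, ← h₁₃] at haat
  rw [← hs] at hsst
  have has := leg_ne_base hne haas
  have hat := leg_ne_base hne haat
  have hst := leg_ne_base hne hsst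
  have htypes := eq_or_eq_or_eq_of_isosceles hT hne haas haat hsst
  have hz₂₃ := htypes _ (mem_triangleTypes hz hy₂ hy₃ (by grind) (by grind) (by grind))
  have hz₁₂ := htypes _ (mem_triangleTypes hz hy₁ hy₂ (by grind) (by grind) (by grind))
  simp only [multiset_triple_eq_triple_iff] at hz₂₃ hz₁₂
  clear htypes
  -- Otherwise `x` and `z` are both centres of the circle through `y₁`, `y₂` and `y₃`.
  by_contra hbase
  have hza₁ : dist y₁ z = dist x y₁ := by grind [dist_comm]
  have hza₂ : dist y₂ z = dist x y₁ := by grind [dist_comm]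
  have hza₃ : dist y₃ z = dist x y₁ := by grind [dist_comm]
  grind [eq_or_eq_or_eq_of_dist_eq_of_dist_eq hV (Ne.symm hnd.1.2.2.2) hza₁ hza₂ hza₃
    (dist_comm y₁ x) ((dist_comm y₂ x).trans h₁₂.symm) ((dist_comm y₃ x).trans h₁₃.symm)]

theorem base_ne_base_of_equidistant_triple (hV : finrank ℝ V = 2) (hP : 6 ≤ P.encard)
    (hT : (triangleTypes P).encard ≤ 3) (hne : ∀ r, {r, r, r} ∉ triangleTypes P)
    {x y₁ y₂ y₃ : X} (hmem : {x, y₁, y₂, y₃} ⊆ P) (hnd : [x, y₁, y₂, y₃].Nodup)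
    (h₁₂ : dist x y₁ = dist x y₂) (h₁₃ : dist x y₁ = dist x y₃) : dist y₁ y₂ ≠ dist y₁ y₃ := by
  classical
  intro hs
  have hbase {z : X} (hz : z ∈ P) (hzF : z ∉ ({x, y₁, y₂, y₃} : Finset X)) :
      dist z y₂ = dist y₁ y₂ ∧ dist z y₃ = dist y₁ y₂ :=
    dist_eq_base_of_equidistant_triple hV hT hne (by grind) (by grind) h₁₂ h₁₃ hs
  obtain ⟨z, hz, hzF⟩ := exists_mem_notMem_of_six_le_encard hP {x, y₁, y₂, y₃}
    (Finset.card_le_four.trans (by norm_num))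
  obtain ⟨z', hz', hzF'⟩ := exists_mem_notMem_of_six_le_encard hP {z, x, y₁, y₂, y₃}
    Finset.card_le_five
  have hdist := hbase hz hzF
  have hdist' := hbase hz' (Finset.notMem_mono (Finset.subset_insert _ _) hzF')
  grind [eq_or_eq_or_eq_of_dist_eq_of_dist_eq hV (c₁ := y₂) (c₂ := y₃) (by grind)
    hdist.1 hdist'.1 rfl hdist.2 hdist'.2 hs.symm]

theorem dist_ne_dist_of_no_equilateral (hV : finrank ℝ V = 2) (hP : 6 ≤ P.encard)
    (hT : (triangleTypes P).encard ≤ 3) (hne : ∀ r, {r, r, r} ∉ triangleTypes P)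
    {x y₁ y₂ y₃ : X} (hmem : {x, y₁, y₂, y₃} ⊆ P) (hnd : [x, y₁, y₂, y₃].Nodup)
    (h : dist x y₁ = dist x y₂) : dist x y₁ ≠ dist x y₃ := by
  intro h'
  have hbase {u₁ u₂ u₃ : X} := base_ne_base_of_equidistant_triple hV hP hT hne
    (x := x) (y₁ := u₁) (y₂ := u₂) (y₃ := u₃)
  rcases exists_dist_eq_dist_of_equidistant_triple hT hne hmem hnd h h' with hs | hs | hs
  · exact hbase hmem hnd h h' hs
  · exact hbase (hmem.trans' (by simp [Set.insert_subset_iff])) (by grind) h.symm (by grind) hs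
  · exact hbase (hmem.trans' (by simp [Set.insert_subset_iff])) (by grind) h'.symm (by grind) hs

theorem base_ne_dist_of_no_equilateral (hV : finrank ℝ V = 2) (hP : 6 ≤ P.encard)
    (hT : (triangleTypes P).encard ≤ 3) (hne : ∀ r, {r, r, r} ∉ triangleTypes P)
    {x y₁ y₂ p q r : X} (hmem : {x, y₁, y₂, p, q, r} ⊆ P) (hnd : [x, y₁, y₂, p, q, r].Nodup)
    (h : dist x y₁ = dist x y₂) (hdist : [dist x y₁, dist x p, dist x q, dist x r].Nodup) :
    dist y₁ y₂ ≠ dist x r := by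
  intro hbase
  have hpqr := distances_mem_triangleTypes hT hmem hnd h hdist
  simp only [Set.insert_subset_iff, Set.singleton_subset_iff] at hmem
  simp only [List.nodup_cons, List.mem_cons, List.not_mem_nil, or_false, not_or] at hnd hdist
  obtain ⟨hx, hy₁, hy₂, hp, hq, hr⟩ := hmem
  have hyy := mem_triangleTypes hx hy₁ hy₂ (by grind) (by grind) (by grind)
  have hy₁p := mem_triangleTypes hx hy₁ hp (by grind) (by grind) (by grind)
  have hy₁q := mem_triangleTypes hx hy₁ hq (by grind) (by grind) (by grind)
  have hy₂p := mem_triangleTypes hx hy₂ hp (by grind) (by grind) (by grind)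
  have hpr := mem_triangleTypes hx hp hr (by grind) (by grind) (by grind)
  rw [← h, hbase] at hyy
  have hpigeon := exists_eq_of_encard_le_three hT hyy hpqr hy₁p hy₁q
  simp only [multiset_triple_eq_triple_iff] at hpigeon
  have hdist₁ : dist y₁ p = dist x q := by grind
  rw [hdist₁] at hy₁p
  have htypes := eq_or_eq_or_eq_of_encard_le_three hT hyy hpqr hy₁p
    (by grind [multiset_triple_eq_triple_iff]) (by grind [multiset_triple_eq_triple_iff])
    (by grind [multiset_triple_eq_triple_iff])
  have htype₂ := htypes _ hy₂p
  have htyper := htypes _ hpr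
  simp only [multiset_triple_eq_triple_iff] at htype₂ htyper
  have hdist₂ : dist y₂ p = dist x q := by grind
  have hdistr : dist p r = dist x q := by grind
  exact dist_ne_dist_of_no_equilateral hV hP hT hne (x := p) (y₁ := y₁) (y₂ := y₂) (y₃ := r)
    (by grind) (by grind) (by rw [dist_comm p, dist_comm p, hdist₁, hdist₂])
    (by rw [dist_comm p, hdist₁, hdistr])

theorem not_nodup_dist_of_no_equilateral (hV : finrank ℝ V = 2) (hP : 6 ≤ P.encard)
    (hT : (triangleTypes P).encard ≤ 3) (hne : ∀ r, {r, r, r} ∉ triangleTypes P)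
    {x y₁ y₂ p q r : X} (hmem : {x, y₁, y₂, p, q, r} ⊆ P) (hnd : [x, y₁, y₂, p, q, r].Nodup)
    (h : dist x y₁ = dist x y₂) : ¬ [dist x y₁, dist x p, dist x q, dist x r].Nodup := by
  intro hdist
  have hbase_p : dist y₁ y₂ ≠ dist x p :=
    base_ne_dist_of_no_equilateral hV hP hT hne (p := q) (q := r) (by grind) (by grind) h (by grind)
  have hbase_q : dist y₁ y₂ ≠ dist x q :=
    base_ne_dist_of_no_equilateral hV hP hT hne (p := p) (q := r) (by grind) (by grind) h (by grind)
  have hbase_r : dist y₁ y₂ ≠ dist x r :=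
    base_ne_dist_of_no_equilateral hV hP hT hne hmem hnd h hdist
  have hpqr := distances_mem_triangleTypes hT hmem hnd h hdist
  simp only [Set.insert_subset_iff, Set.singleton_subset_iff] at hmem
  simp only [List.nodup_cons, List.mem_cons, List.not_mem_nil, or_false, not_or] at hnd hdist
  obtain ⟨hx, hy₁, hy₂, hp, hq, hr⟩ := hmem
  have hyy := mem_triangleTypes hx hy₁ hy₂ (by grind) (by grind) (by grind)
  have hyp := mem_triangleTypes hx hy₁ hp (by grind) (by grind) (by grind)
  have hyq := mem_triangleTypes hx hy₁ hq (by grind) (by grind) (by grind)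
  have hyr := mem_triangleTypes hx hy₁ hr (by grind) (by grind) (by grind)
  rw [← h] at hyy
  have hpq := exists_eq_of_encard_le_three hT hyy hpqr hyp hyq
  have hpr := exists_eq_of_encard_le_three hT hyy hpqr hyp hyr
  simp only [multiset_triple_eq_triple_iff] at hpq hpr
  grind

theorem not_nodup_dist_of_no_equilateral_of_dist_eq (hV : finrank ℝ V = 2) (hP : 6 ≤ P.encard)
    (hT : (triangleTypes P).encard ≤ 3) (hne : ∀ r, {r, r, r} ∉ triangleTypes P)
    {x y₁ y₂ z₁ z₂ w : X} (hmem : {x, y₁, y₂, z₁, z₂, w} ⊆ P)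
    (hnd : [x, y₁, y₂, z₁, z₂, w].Nodup) (hy : dist x y₁ = dist x y₂)
    (hz : dist x z₁ = dist x z₂) : ¬ [dist x y₁, dist x z₁, dist x w].Nodup := by
  intro hdist
  have hyzw := distances_notMem_triangleTypes hT hne hmem hnd hy hz hdist
  have htypes := eq_or_eq_or_eq_of_distances_notMem hT (z := z₁)
    (hmem.trans' (by simp [Set.insert_subset_iff])) (by grind) hdist hyzw
  have hy₁z₂ : dist y₁ z₁ = dist y₁ z₂ :=
    dist_eq_dist_of_distances_notMem hT (hmem.trans' (by simp [Set.insert_subset_iff]))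
      (by grind) hz hdist hyzw
  have hz₁y₂ : dist z₁ y₁ = dist z₁ y₂ :=
    dist_eq_dist_of_distances_notMem hT (w := w) (hmem.trans' (by simp [Set.insert_subset_iff]))
      (by grind) hy (by grind)
      (by rwa [Multiset.insert_eq_cons, Multiset.insert_eq_cons, Multiset.cons_swap])
  simp only [Set.insert_subset_iff, Set.singleton_subset_iff] at hmem
  simp only [List.nodup_cons, List.mem_cons, List.not_mem_nil, or_false, not_or] at hnd hdist
  obtain ⟨hx, hy₁, hy₂, hz₁, hz₂, -⟩ := hmem
  have hyy := htypes _ (mem_triangleTypes hx hy₁ hy₂ (by grind) (by grind) (by grind))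
  have hzz := htypes _ (mem_triangleTypes hx hz₁ hz₂ (by grind) (by grind) (by grind))
  have hyzz := htypes _ (mem_triangleTypes hy₁ hz₁ hz₂ (by grind) (by grind) (by grind))
  rw [← hy] at hyy
  rw [← hz] at hzz
  rw [← hy₁z₂] at hyzz
  simp only [multiset_triple_eq_triple_iff] at hyy hzz hyzz
  have hyz_ne_y : dist y₁ z₁ ≠ dist x y₁ := fun heq =>
    dist_ne_dist_of_no_equilateral hV hP hT hne (x := y₁) (y₁ := x) (y₂ := z₁) (y₃ := z₂)
      (by grind) (by grind) (by grind [dist_comm]) (by grind [dist_comm])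
  have hyz_ne_z : dist y₁ z₁ ≠ dist x z₁ := fun heq =>
    dist_ne_dist_of_no_equilateral hV hP hT hne (x := z₁) (y₁ := x) (y₂ := y₁) (y₃ := y₂)
      (by grind) (by grind) (by grind [dist_comm]) (by grind [dist_comm])
  grind

theorem dist_ne_dist_of_dist_eq_dist (hV : finrank ℝ V = 2) (hP : 6 ≤ P.encard)
    (hT : (triangleTypes P).encard ≤ 3) (hne : ∀ r, {r, r, r} ∉ triangleTypes P)
    {x y₁ y₂ z₁ z₂ w : X} (hmem : {x, y₁, y₂, z₁, z₂, w} ⊆ P)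
    (hnd : [x, y₁, y₂, z₁, z₂, w].Nodup) (hy : dist x y₁ = dist x y₂) :
    dist x z₁ ≠ dist x z₂ := by
  intro hz
  have hyz : dist x y₁ ≠ dist x z₁ :=
    dist_ne_dist_of_no_equilateral hV hP hT hne (hmem.trans' (by grind)) (by grind) hy
  have hyw : dist x y₁ ≠ dist x w :=
    dist_ne_dist_of_no_equilateral hV hP hT hne (hmem.trans' (by grind)) (by grind) hy
  have hzw : dist x z₁ ≠ dist x w :=
    dist_ne_dist_of_no_equilateral hV hP hT hne (hmem.trans' (by grind)) (by grind) hz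
  exact not_nodup_dist_of_no_equilateral_of_dist_eq hV hP hT hne hmem hnd hy hz (by grind)

theorem exists_equilateral_mem_triangleTypes (hV : finrank ℝ V = 2) (hP : 6 ≤ P.encard)
    (hT : (triangleTypes P).encard ≤ 3) : ∃ r, {r, r, r} ∈ triangleTypes P := by
  classical
  by_contra! hne
  obtain ⟨x, hx, -⟩ := exists_mem_notMem_of_six_le_encard hP ∅ (by simp)
  obtain ⟨y₁, hy₁, y₂, hy₂, hxy₁, hxy₂, hy₁₂, h⟩ := exists_dist_eq_dist hP hT hx
  obtain ⟨p, hp, hpF⟩ := exists_mem_notMem_of_six_le_encard hP {x, y₁, y₂}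
    (Finset.card_le_three.trans (by norm_num))
  obtain ⟨q, hq, hqF⟩ := exists_mem_notMem_of_six_le_encard hP {p, x, y₁, y₂}
    (Finset.card_le_four.trans (by norm_num))
  obtain ⟨r, hr, hrF⟩ := exists_mem_notMem_of_six_le_encard hP {q, p, x, y₁, y₂}
    Finset.card_le_five
  simp only [Finset.mem_insert, Finset.mem_singleton, not_or] at hpF hqF hrF
  have hmem : {x, y₁, y₂, p, q, r} ⊆ P := by
    simp only [Set.insert_subset_iff, Set.singleton_subset_iff]
    exact ⟨hx, hy₁, hy₂, hp, hq, hr⟩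
  have hnd : [x, y₁, y₂, p, q, r].Nodup := by grind
  clear hpF hqF hrF
  have hyp : dist x y₁ ≠ dist x p :=
    dist_ne_dist_of_no_equilateral hV hP hT hne (by grind) (by grind) h
  have hyq : dist x y₁ ≠ dist x q :=
    dist_ne_dist_of_no_equilateral hV hP hT hne (by grind) (by grind) h
  have hyr : dist x y₁ ≠ dist x r :=
    dist_ne_dist_of_no_equilateral hV hP hT hne (by grind) (by grind) h
  have hpq : dist x p ≠ dist x q := dist_ne_dist_of_dist_eq_dist hV hP hT hne hmem hnd h
  have hpr : dist x p ≠ dist x r :=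
    dist_ne_dist_of_dist_eq_dist hV hP hT hne (w := q) (by grind) (by grind) h
  have hqr : dist x q ≠ dist x r :=
    dist_ne_dist_of_dist_eq_dist hV hP hT hne (w := p) (by grind) (by grind) h
  exact not_nodup_dist_of_no_equilateral hV hP hT hne hmem hnd h (by grind)

end Planar

/-- `v` lists the vertices of an equilateral triangle whose circumradius has square `ρ`. -/
structure IsEquilateral {X : Type*} [Dist X] (v : Fin 3 → X) (ρ : ℝ) : Prop where
  pos : 0 < ρ
  dist_sq {i j : Fin 3} (hij : i ≠ j) : dist (v i) (v j) ^ 2 = 3 * ρ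

theorem IsEquilateral.vertex_ne {X : Type*} [PseudoMetricSpace X] {v : Fin 3 → X} {ρ : ℝ}
    (hv : IsEquilateral v ρ) {i j : Fin 3} (hij : i ≠ j) : v i ≠ v j := by
  intro heq
  have h := hv.dist_sq hij
  rw [heq, dist_self] at h
  linarith [hv.pos]

section AxisPoint

variable {V : Type*} [AddCommGroup V] [Module ℝ V] {v : Fin 3 → V}

/-- The centre of a triangle, i.e. the centroid of its vertices. -/
def center (v : Fin 3 → V) : V := (3⁻¹ : ℝ) • ∑ i, v i

/-- The point with parameter `s` on the line joining the centre of a triangle to the vertex `v i`,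
normalised so that `s = 0` is the centre and `s = 1` the vertex. -/
def axisPoint (v : Fin 3 → V) (s : ℝ) (i : Fin 3) : V := center v + s • (v i - center v)

theorem axisPoint_zero (i : Fin 3) : axisPoint v 0 i = center v := by
  simp [axisPoint]

theorem axisPoint_one (i : Fin 3) : axisPoint v 1 i = v i := by
  simp [axisPoint]

theorem sum_sub_center : ∑ i, (v i - center v) = 0 := by
  rw [Finset.sum_sub_distrib, Finset.sum_const, Finset.card_univ, Fintype.card_fin, center,
    ← Nat.cast_smul_eq_nsmul ℝ, smul_smul]
  norm_num

end AxisPoint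

namespace IsEquilateral

variable {V : Type*} [NormedAddCommGroup V] [InnerProductSpace ℝ V] {v : Fin 3 → V} {ρ : ℝ}

open Module

theorem inner_sub_center (hv : IsEquilateral v ρ) (i j : Fin 3) :
    inner ℝ (v i - center v) (v j - center v) = if i = j then ρ else -ρ / 2 := by
  have hsum (i : Fin 3) := congrArg (inner ℝ (v i - center v)) (sum_sub_center (v := v))
  have hdist (i j : Fin 3) (hij : i ≠ j) :
      inner ℝ (v i - center v) (v i - center v)
        - 2 * inner ℝ (v i - center v) (v j - center v)
        + inner ℝ (v j - center v) (v j - center v) = 3 * ρ := by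
    rw [← hv.dist_sq hij, dist_eq_norm, ← sub_sub_sub_cancel_right (v i) (v j) (center v),
      norm_sub_sq_real, real_inner_self_eq_norm_sq, real_inner_self_eq_norm_sq]
  simp only [Fin.sum_univ_three, inner_add_right, inner_zero_right] at hsum
  have hsum₀ := hsum 0
  have hsum₁ := hsum 1
  have hsum₂ := hsum 2
  have hdist₀₁ := hdist 0 1 (by decide)
  have hdist₀₂ := hdist 0 2 (by decide)
  have hdist₁₂ := hdist 1 2 (by decide)
  have hcomm (i j : Fin 3) := real_inner_comm (v i - center v) (v j - center v)
  have hcomm₀₁ := hcomm 0 1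
  have hcomm₀₂ := hcomm 0 2
  have hcomm₁₂ := hcomm 1 2
  fin_cases i <;> fin_cases j <;> simp [-inner_self_eq_norm_sq_to_K] <;> linarith

theorem dist_axisPoint_sq (hv : IsEquilateral v ρ) (s t : ℝ) (i j : Fin 3) :
    dist (axisPoint v s i) (axisPoint v t j) ^ 2 =
      if i = j then ρ * (s - t) ^ 2 else ρ * (s ^ 2 + s * t + t ^ 2) := by
  rw [dist_eq_norm, axisPoint, axisPoint, add_sub_add_left_eq_sub, norm_sub_sq_real,
    ← real_inner_self_eq_norm_sq, ← real_inner_self_eq_norm_sq]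
  simp only [real_inner_smul_left, real_inner_smul_right, hv.inner_sub_center, if_true]
  split_ifs <;> ring

theorem dist_center_sq (hv : IsEquilateral v ρ) (i : Fin 3) : dist (v i) (center v) ^ 2 = ρ := by
  rw [dist_eq_norm, ← real_inner_self_eq_norm_sq, hv.inner_sub_center, if_pos rfl]

theorem ne_center (hv : IsEquilateral v ρ) (i : Fin 3) : v i ≠ center v := by
  intro heq
  have h := hv.dist_center_sq i
  rw [heq, dist_self] at h
  linarith [hv.pos]

theorem exists_eq_axisPoint (hV : finrank ℝ V = 2) (hv : IsEquilateral v ρ) {i j k : Fin 3}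
    (hij : i ≠ j) (hik : i ≠ k) (hjk : j ≠ k) {x : V} (hx : dist (v i) x = dist (v j) x) :
    ∃ s, x = axisPoint v s k := by
  have : Fact (finrank ℝ V = 1 + 1) := ⟨hV⟩
  set L := (ℝ ∙ (v j - v i))ᗮ
  have hcenter : dist (v i) (center v) = dist (v j) (center v) := by
    rw [← sq_eq_sq₀ dist_nonneg dist_nonneg, hv.dist_center_sq, hv.dist_center_sq]
  have hvertex : dist (v i) (v k) = dist (v j) (v k) := by
    rw [← sq_eq_sq₀ dist_nonneg dist_nonneg, hv.dist_sq hik, hv.dist_sq hjk]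
  have hmem {y : V} (hy : dist (v i) y = dist (v j) y) : y - center v ∈ L :=
    Submodule.mem_orthogonal_singleton_iff_inner_left.mpr
      (EuclideanGeometry.inner_vsub_vsub_of_dist_eq_of_dist_eq hcenter hy)
  have hL : finrank ℝ L = 1 :=
    Submodule.finrank_orthogonal_span_singleton (sub_ne_zero.mpr (hv.vertex_ne hij.symm))
  have hne : (⟨v k - center v, hmem hvertex⟩ : L) ≠ 0 := fun h =>
    hv.ne_center k (sub_eq_zero.mp (congrArg Subtype.val h))
  obtain ⟨s, hs⟩ := (finrank_eq_one_iff_of_nonzero' _ hne).mp hL ⟨_, hmem hx⟩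
  have hs : s • (v k - center v) = x - center v := congrArg Subtype.val hs
  exact ⟨s, by rw [axisPoint, hs, add_sub_cancel]⟩

end IsEquilateral

/-- The congruence types of the triangles with vertices in `P`, recorded by the squared side lengths
in units of `ρ`. With `ρ` the squared circumradius of an equilateral triangle, the entries become
polynomials in the parameters of the axis points. -/
def squaredTypes {X : Type*} [Dist X] (ρ : ℝ) (P : Set X) : Set (Multiset ℝ) :=
  Multiset.map (fun d => d ^ 2 / ρ) '' triangleTypes P

theorem encard_squaredTypes_le {X : Type*} [Dist X] (ρ : ℝ) (P : Set X) :
    (squaredTypes ρ P).encard ≤ (triangleTypes P).encard :=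
  Set.encard_image_le _ _

theorem mem_squaredTypes {X : Type*} [PseudoMetricSpace X] {P : Set X} {ρ α β γ : ℝ} (hρ : ρ ≠ 0)
    {x y z : X} (hx : x ∈ P) (hy : y ∈ P) (hz : z ∈ P) (hxy : dist x y ^ 2 = ρ * α)
    (hxz : dist x z ^ 2 = ρ * β) (hyz : dist y z ^ 2 = ρ * γ) (hα : α ≠ 0) (hβ : β ≠ 0)
    (hγ : γ ≠ 0) : {α, β, γ} ∈ squaredTypes ρ P := by
  have hne {p q : X} {δ : ℝ} (hpq : dist p q ^ 2 = ρ * δ) (hδ : δ ≠ 0) : p ≠ q := by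
    rintro rfl
    simp_all
  refine ⟨_, mem_triangleTypes hx hy hz (hne hxy hα) (hne hxz hβ) (hne hyz hγ), ?_⟩
  simp [hxy, hxz, hyz, hρ]

theorem sq_add_self_add_one_ne_sub_one_sq {s : ℝ} (hs : s ≠ 0) : s ^ 2 + s + 1 ≠ (s - 1) ^ 2 :=
  fun h => hs (by linarith)

theorem eq_neg_two_of_sq_add_self_add_one_eq_three {s : ℝ} (hs : s ≠ 1)
    (h : s ^ 2 + s + 1 = 3) : s = -2 := by
  grind

namespace IsEquilateral

section Metric

variable {X : Type*} [PseudoMetricSpace X] {v : Fin 3 → X} {ρ : ℝ} {P : Set X}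

theorem equilateral_mem_squaredTypes (hv : IsEquilateral v ρ) (hvP : ∀ i, v i ∈ P) :
    {3, 3, 3} ∈ squaredTypes ρ P := by
  have hside {i j : Fin 3} (hij : i ≠ j) : dist (v i) (v j) ^ 2 = ρ * 3 :=
    (hv.dist_sq hij).trans (mul_comm _ _)
  exact mem_squaredTypes hv.pos.ne' (hvP 0) (hvP 1) (hvP 2) (hside (by decide)) (hside (by decide))
    (hside (by decide)) three_ne_zero three_ne_zero three_ne_zero

theorem exists_dist_vertex_eq (hT : (triangleTypes P).encard ≤ 3) (hv : IsEquilateral v ρ)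
    (hvP : ∀ i, v i ∈ P) {x : X} (hx : x ∈ P) (hxv : ∀ i, v i ≠ x) :
    ∃ i j, i ≠ j ∧ dist (v i) x = dist (v j) x := by
  by_contra! hne
  obtain ⟨a, hside⟩ : ∃ a, ∀ {i j : Fin 3}, i ≠ j → dist (v i) (v j) = a :=
    ⟨√(3 * ρ), fun hij => by rw [← hv.dist_sq hij, Real.sqrt_sq dist_nonneg]⟩
  have htype {i j : Fin 3} (hij : i ≠ j) : {a, dist (v i) x, dist (v j) x} ∈ triangleTypes P :=
    hside hij ▸ mem_triangleTypes (hvP i) (hvP j) hx (hv.vertex_ne hij) (hxv i) (hxv j)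
  have hequilateral : {a, a, a} ∈ triangleTypes P := by
    have hmem := mem_triangleTypes (hvP 0) (hvP 1) (hvP 2) (hv.vertex_ne (by decide))
      (hv.vertex_ne (by decide)) (hv.vertex_ne (by decide))
    rwa [hside (by decide), hside (by decide), hside (by decide)] at hmem
  have hpigeon := exists_eq_of_encard_le_three hT hequilateral
    (htype (by decide : (0 : Fin 3) ≠ 1)) (htype (by decide : (0 : Fin 3) ≠ 2))
    (htype (by decide : (1 : Fin 3) ≠ 2))
  simp only [multiset_triple_eq_triple_iff] at hpigeon
  have hne₀₁ := hne 0 1 (by decide)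
  have hne₀₂ := hne 0 2 (by decide)
  have hne₁₂ := hne 1 2 (by decide)
  clear hne htype hside hv hequilateral
  grind (splits := 20)

end Metric

section Planar

variable {V : Type*} [NormedAddCommGroup V] [InnerProductSpace ℝ V] {v : Fin 3 → V} {ρ : ℝ}
  {P : Set V}

open Module

theorem dist_vertex_axisPoint_sq (hv : IsEquilateral v ρ) (s : ℝ) (i j : Fin 3) :
    dist (v i) (axisPoint v s j) ^ 2 =
      ρ * if i = j then (s - 1) ^ 2 else s ^ 2 + s + 1 := by
  rw [← axisPoint_one (v := v) i, hv.dist_axisPoint_sq]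
  split_ifs <;> ring

theorem isosceles_mem_squaredTypes (hv : IsEquilateral v ρ) (hvP : ∀ i, v i ∈ P) {s : ℝ} {i : Fin 3}
    (hs : axisPoint v s i ∈ P) :
    {3, s ^ 2 + s + 1, s ^ 2 + s + 1} ∈ squaredTypes ρ P := by
  obtain ⟨j, k, hij, hik, hjk⟩ :=
    (by decide : ∀ i : Fin 3, ∃ j k : Fin 3, i ≠ j ∧ i ≠ k ∧ j ≠ k) i
  have hpos : s ^ 2 + s + 1 ≠ 0 := by nlinarith [sq_nonneg (s + 1 / 2)]
  exact mem_squaredTypes hv.pos.ne' (hvP j) (hvP k) hs ((hv.dist_sq hjk).trans (mul_comm _ _))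
    (by rw [hv.dist_vertex_axisPoint_sq, if_neg hij.symm])
    (by rw [hv.dist_vertex_axisPoint_sq, if_neg hik.symm]) three_ne_zero hpos hpos

theorem vertex_mem_squaredTypes (hv : IsEquilateral v ρ) (hvP : ∀ i, v i ∈ P) {s : ℝ}
    (hs₁ : s ≠ 1) {i : Fin 3} (hs : axisPoint v s i ∈ P) :
    {3, s ^ 2 + s + 1, (s - 1) ^ 2} ∈ squaredTypes ρ P := by
  obtain ⟨j, hji⟩ := exists_ne i
  have hpos : s ^ 2 + s + 1 ≠ 0 := by nlinarith [sq_nonneg (s + 1 / 2)]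
  exact mem_squaredTypes hv.pos.ne' (hvP j) (hvP i) hs ((hv.dist_sq hji).trans (mul_comm _ _))
    (by rw [hv.dist_vertex_axisPoint_sq, if_neg hji])
    (by rw [hv.dist_vertex_axisPoint_sq, if_pos rfl]) three_ne_zero hpos
    (pow_ne_zero 2 (sub_ne_zero.mpr hs₁))

theorem exists_eq_axisPoint_of_mem (hV : finrank ℝ V = 2) (hT : (triangleTypes P).encard ≤ 3)
    (hv : IsEquilateral v ρ) (hvP : ∀ i, v i ∈ P) {x : V} (hx : x ∈ P) (hxv : ∀ i, v i ≠ x) :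
    ∃ s i, s ≠ 1 ∧ x = axisPoint v s i := by
  obtain ⟨i, j, hij, hdist⟩ := exists_dist_vertex_eq hT hv hvP hx hxv
  obtain ⟨k, hik, hjk⟩ := (by decide : ∀ i j : Fin 3, ∃ k : Fin 3, i ≠ k ∧ j ≠ k) i j
  obtain ⟨s, rfl⟩ := hv.exists_eq_axisPoint hV hij hik hjk hdist
  refine ⟨s, k, ?_, rfl⟩
  rintro rfl
  exact hxv k (axisPoint_one k).symm

theorem exists_ne_eq_axisPoint (hV : finrank ℝ V = 2) (hP : 6 ≤ P.encard)
    (hT : (triangleTypes P).encard ≤ 3) (hv : IsEquilateral v ρ) (hvP : ∀ i, v i ∈ P)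
    {F : Finset V} (hF : F.card ≤ 2) :
    ∃ s i, s ≠ 1 ∧ axisPoint v s i ∈ P ∧ axisPoint v s i ∉ F := by
  classical
  have hcard : (F ∪ Finset.univ.image v).card ≤ 5 :=
    (Finset.card_union_le _ _).trans (add_le_add hF Finset.card_image_le)
  obtain ⟨x, hx, hxF⟩ := exists_mem_notMem_of_six_le_encard hP _ hcard
  simp only [Finset.mem_union, Finset.mem_image, Finset.mem_univ, true_and, not_or,
    not_exists] at hxF
  obtain ⟨s, i, hs, rfl⟩ := exists_eq_axisPoint_of_mem hV hT hv hvP hx hxF.2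
  exact ⟨s, i, hs, hx, hxF.1⟩

theorem center_notMem (hV : finrank ℝ V = 2) (hP : 6 ≤ P.encard)
    (hT : (triangleTypes P).encard ≤ 3) (hv : IsEquilateral v ρ) (hvP : ∀ i, v i ∈ P) :
    center v ∉ P := by
  intro hc
  obtain ⟨s, i, hs₁, hsP, hsc⟩ := exists_ne_eq_axisPoint hV hP hT hv hvP (F := {center v}) (by simp)
  have hs₀ : s ≠ 0 := by
    rintro rfl
    exact hsc (by simp [axisPoint_zero])
  have hS := (encard_squaredTypes_le ρ P).trans hT
  have hcenter_isosceles : {3, 1, 1} ∈ squaredTypes ρ P := by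
    simpa using hv.isosceles_mem_squaredTypes hvP (s := 0) (i := i) (axisPoint_zero (v := v) i ▸ hc)
  have hisosceles := hv.isosceles_mem_squaredTypes hvP hsP
  have hvertex := hv.vertex_mem_squaredTypes hvP hs₁ hsP
  have hthree := hv.equilateral_mem_squaredTypes hvP
  have hs : s = -1 ∨ s = -2 := by
    have hpigeon := exists_eq_of_encard_le_three hS hthree hcenter_isosceles hisosceles hvertex
    simp only [multiset_triple_eq_triple_iff] at hpigeon
    have hside : s ^ 2 + s + 1 = 1 ∨ s ^ 2 + s + 1 = 3 := by
      grind [sq_add_self_add_one_ne_sub_one_sq hs₀]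
    rcases hside with hside | hside
    · left; grind
    · right; exact eq_neg_two_of_sq_add_self_add_one_eq_three hs₁ hside
  obtain ⟨j, hji⟩ := exists_ne i
  have hcenter_vertex : {s ^ 2, 1, s ^ 2 + s + 1} ∈ squaredTypes ρ P :=
    mem_squaredTypes hv.pos.ne' hc hsP (hvP j)
      (by rw [← axisPoint_zero (v := v) i, hv.dist_axisPoint_sq, if_pos rfl]; ring)
      (by rw [dist_comm, hv.dist_center_sq, mul_one])
      (by rw [dist_comm, hv.dist_vertex_axisPoint_sq, if_neg hji])
      (pow_ne_zero 2 hs₀) one_ne_zero (by nlinarith [sq_nonneg (s + 1 / 2)])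
  have hpigeon := exists_eq_of_encard_le_three hS hthree hcenter_isosceles hvertex hcenter_vertex
  simp only [multiset_triple_eq_triple_iff] at hpigeon
  rcases hs with rfl | rfl <;> norm_num at hpigeon

theorem ne_zero_of_axisPoint_mem (hV : finrank ℝ V = 2) (hP : 6 ≤ P.encard)
    (hT : (triangleTypes P).encard ≤ 3) (hv : IsEquilateral v ρ) (hvP : ∀ i, v i ∈ P) {s : ℝ}
    {i : Fin 3} (hs : axisPoint v s i ∈ P) : s ≠ 0 := by
  rintro rfl
  exact center_notMem hV hP hT hv hvP (axisPoint_zero (v := v) i ▸ hs)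

theorem eq_of_axisPoint_neg_two_mem (hT : (triangleTypes P).encard ≤ 3) (hv : IsEquilateral v ρ)
    (hvP : ∀ i, v i ∈ P) {i j : Fin 3} (hi : axisPoint v (-2) i ∈ P)
    (hj : axisPoint v (-2) j ∈ P) : i = j := by
  by_contra hij
  obtain ⟨k, hki, hkj⟩ := (by decide : ∀ i j : Fin 3, ∃ k : Fin 3, k ≠ i ∧ k ≠ j) i j
  have hdist : dist (axisPoint v (-2) i) (axisPoint v (-2) j) ^ 2 = ρ * 12 := by
    rw [hv.dist_axisPoint_sq, if_neg hij]
    norm_num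
  have hdist_of_ne {l m : Fin 3} (hlm : l ≠ m) : dist (axisPoint v (-2) m) (v l) ^ 2 = ρ * 3 := by
    rw [dist_comm, hv.dist_vertex_axisPoint_sq, if_neg hlm]
    norm_num
  have hdist_self : dist (axisPoint v (-2) i) (v i) ^ 2 = ρ * 9 := by
    rw [dist_comm, hv.dist_vertex_axisPoint_sq, if_pos rfl]
    norm_num
  have hvi := mem_squaredTypes hv.pos.ne' hi hj (hvP i) hdist hdist_self (hdist_of_ne hij)
    (by norm_num) (by norm_num) (by norm_num)
  have hvk := mem_squaredTypes hv.pos.ne' hi hj (hvP k) hdist (hdist_of_ne hki) (hdist_of_ne hkj)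
    (by norm_num) (by norm_num) (by norm_num)
  have hpigeon := exists_eq_of_encard_le_three ((encard_squaredTypes_le ρ P).trans hT)
    (hv.equilateral_mem_squaredTypes hvP) (hv.vertex_mem_squaredTypes hvP (by norm_num) hi) hvi hvk
  simp only [multiset_triple_eq_triple_iff] at hpigeon
  norm_num at hpigeon

theorem axisPoint_neg_two_notMem (hV : finrank ℝ V = 2) (hP : 6 ≤ P.encard)
    (hT : (triangleTypes P).encard ≤ 3) (hv : IsEquilateral v ρ) (hvP : ∀ i, v i ∈ P)
    (i : Fin 3) : axisPoint v (-2) i ∉ P := by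
  intro hiP
  obtain ⟨t, j, ht₁, hjP, hji⟩ :=
    exists_ne_eq_axisPoint hV hP hT hv hvP (F := {axisPoint v (-2) i}) (by simp)
  have hS := (encard_squaredTypes_le ρ P).trans hT
  have hthree := hv.equilateral_mem_squaredTypes hvP
  have hvertex := hv.vertex_mem_squaredTypes hvP (by norm_num) hiP
  have ht₂ : t ≠ -2 := by
    rintro rfl
    rw [eq_of_axisPoint_neg_two_mem hT hv hvP hiP hjP] at hji
    exact hji (Finset.mem_singleton_self _)
  have hisosceles' := hv.isosceles_mem_squaredTypes hvP hjP
  have hvertex' := hv.vertex_mem_squaredTypes hvP ht₁ hjP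
  have hpigeon := exists_eq_of_encard_le_three hS hthree hvertex hisosceles' hvertex'
  simp only [multiset_triple_eq_triple_iff] at hpigeon
  have hne_axis := sq_add_self_add_one_ne_sub_one_sq (ne_zero_of_axisPoint_mem hV hP hT hv hvP hjP)
  have hside_ne_three : t ^ 2 + t + 1 ≠ 3 := fun h =>
    ht₂ (eq_neg_two_of_sq_add_self_add_one_eq_three ht₁ h)
  have hvertex_ne_three : t ^ 2 + t + 1 = 9 → (t - 1) ^ 2 ≠ 3 := by grind
  clear hvertex hisosceles' hvertex' hthree hvP hv
  norm_num at hpigeon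
  grind

theorem sq_add_self_add_one_ne_three (hV : finrank ℝ V = 2) (hP : 6 ≤ P.encard)
    (hT : (triangleTypes P).encard ≤ 3) (hv : IsEquilateral v ρ) (hvP : ∀ i, v i ∈ P) {s : ℝ}
    {i : Fin 3} (hs₁ : s ≠ 1) (hs : axisPoint v s i ∈ P) : s ^ 2 + s + 1 ≠ 3 := fun h =>
  axisPoint_neg_two_notMem hV hP hT hv hvP i (eq_neg_two_of_sq_add_self_add_one_eq_three hs₁ h ▸ hs)

theorem eq_or_eq_or_eq_of_axisPoint_mem (hV : finrank ℝ V = 2) (hP : 6 ≤ P.encard)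
    (hT : (triangleTypes P).encard ≤ 3) (hv : IsEquilateral v ρ) (hvP : ∀ i, v i ∈ P) {s : ℝ}
    {i : Fin 3} (hs₁ : s ≠ 1) (hs : axisPoint v s i ∈ P) :
    ∀ m ∈ squaredTypes ρ P, m = {3, 3, 3} ∨ m = {3, s ^ 2 + s + 1, s ^ 2 + s + 1} ∨
      m = {3, s ^ 2 + s + 1, (s - 1) ^ 2} := by
  have hne_axis := sq_add_self_add_one_ne_sub_one_sq (ne_zero_of_axisPoint_mem hV hP hT hv hvP hs)
  have hne_three := sq_add_self_add_one_ne_three hV hP hT hv hvP hs₁ hs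
  refine eq_or_eq_or_eq_of_encard_le_three ((encard_squaredTypes_le ρ P).trans hT)
    (hv.equilateral_mem_squaredTypes hvP) (hv.isosceles_mem_squaredTypes hvP hs)
    (hv.vertex_mem_squaredTypes hvP hs₁ hs) ?_ ?_ ?_ <;>
    grind [multiset_triple_eq_triple_iff]

theorem eq_of_axisPoint_mem (hV : finrank ℝ V = 2) (hP : 6 ≤ P.encard)
    (hT : (triangleTypes P).encard ≤ 3) (hv : IsEquilateral v ρ) (hvP : ∀ i, v i ∈ P)
    {s t : ℝ} {i j : Fin 3} (hs₁ : s ≠ 1) (ht₁ : t ≠ 1) (hs : axisPoint v s i ∈ P)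
    (ht : axisPoint v t j ∈ P) : s = t := by
  have hne_t := sq_add_self_add_one_ne_sub_one_sq (ne_zero_of_axisPoint_mem hV hP hT hv hvP ht)
  have hthree_t := sq_add_self_add_one_ne_three hV hP hT hv hvP ht₁ ht
  have htypes := eq_or_eq_or_eq_of_axisPoint_mem hV hP hT hv hvP hs₁ hs
  have hisosceles := htypes _ (hv.isosceles_mem_squaredTypes hvP ht)
  have hvertex := htypes _ (hv.vertex_mem_squaredTypes hvP ht₁ ht)
  simp only [multiset_triple_eq_triple_iff] at hisosceles hvertex
  clear htypes hvP hv
  have hbase : t ^ 2 + t + 1 = s ^ 2 + s + 1 := by grind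
  have hvertex_side : (t - 1) ^ 2 = (s - 1) ^ 2 := by grind
  linarith

theorem exists_eq_vertex_or_eq_axisPoint_neg_one (hV : finrank ℝ V = 2) (hP : 6 ≤ P.encard)
    (hT : (triangleTypes P).encard ≤ 3) (hv : IsEquilateral v ρ) (hvP : ∀ i, v i ∈ P) {x : V}
    (hx : x ∈ P) : ∃ i, x = v i ∨ x = axisPoint v (-1) i := by
  classical
  obtain ⟨s, i, hs₁, hsi, -⟩ := exists_ne_eq_axisPoint hV hP hT hv hvP (F := ∅) (by simp)
  obtain ⟨t, j, ht₁, htj, hj⟩ :=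
    exists_ne_eq_axisPoint hV hP hT hv hvP (F := {axisPoint v s i}) (by simp)
  obtain ⟨u, k, hu₁, huk, hk⟩ := exists_ne_eq_axisPoint hV hP hT hv hvP
    (F := {axisPoint v s i, axisPoint v t j}) Finset.card_le_two
  have hparam {t : ℝ} {j : Fin 3} (ht₁ : t ≠ 1) (htj : axisPoint v t j ∈ P) : t = s :=
    eq_of_axisPoint_mem hV hP hT hv hvP ht₁ hs₁ htj hsi
  obtain rfl := hparam ht₁ htj
  obtain rfl := hparam hu₁ huk
  have hside {i j : Fin 3} (hij : i ≠ j) :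
      dist (axisPoint v u i) (axisPoint v u j) ^ 2 = ρ * (3 * u ^ 2) := by
    rw [hv.dist_axisPoint_sq, if_neg hij]
    ring
  have hne : 3 * u ^ 2 ≠ 0 := by simpa using ne_zero_of_axisPoint_mem hV hP hT hv hvP huk
  have hinner := mem_squaredTypes hv.pos.ne' hsi htj huk (hside (by grind)) (hside (by grind))
    (hside (by grind)) hne hne hne
  have hu : u = -1 := by
    have hne_axis :=
      sq_add_self_add_one_ne_sub_one_sq (ne_zero_of_axisPoint_mem hV hP hT hv hvP huk)
    have htype := eq_or_eq_or_eq_of_axisPoint_mem hV hP hT hv hvP hu₁ huk _ hinner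
    simp only [multiset_triple_eq_triple_iff] at htype
    have hsq : 3 * u ^ 2 = 3 := by grind
    grind
  by_cases hxv : ∀ i, v i ≠ x
  · obtain ⟨t, j, ht₁, rfl⟩ := exists_eq_axisPoint_of_mem hV hT hv hvP hx hxv
    exact ⟨j, .inr (by rw [hparam ht₁ hx, hu])⟩
  · push Not at hxv
    obtain ⟨j, rfl⟩ := hxv
    exact ⟨j, .inl rfl⟩

end Planar

end IsEquilateral

section Hexagon

theorem inner_pt_pt (x y x' y' : ℝ) : inner ℝ (pt x y) (pt x' y') = x * x' + y * y' := by
  simp [pt, PiLp.inner_apply, Fin.sum_univ_two, mul_comm]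

theorem exists_eq_norm_smul_pt_cos_sin (u : Plane) : ∃ α : ℝ, u = ‖u‖ • pt (cos α) (sin α) := by
  have hnorm : ‖(⟨u 0, u 1⟩ : ℂ)‖ = ‖u‖ := by
    rw [Complex.norm_eq_sqrt_sq_add_sq, EuclideanSpace.norm_eq]
    simp [Fin.sum_univ_two]
  refine ⟨Complex.arg ⟨u 0, u 1⟩, ?_⟩
  rw [← hnorm]
  ext i
  fin_cases i
  · exact (Complex.norm_mul_cos_arg ⟨u 0, u 1⟩).symm
  · exact (Complex.norm_mul_sin_arg ⟨u 0, u 1⟩).symm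

theorem sin_three_mul_eq_zero_of_cos_sq {θ : ℝ} (h : cos θ ^ 2 = 1 ∨ 4 * cos θ ^ 2 = 1) :
    sin (3 * θ) = 0 := by
  have hfactor : sin (3 * θ) = sin θ * (4 * cos θ ^ 2 - 1) := by
    rw [sin_three_mul]
    linear_combination -4 * sin θ * sin_sq_add_cos_sq θ
  rcases h with h | h
  · have hsin : sin θ = 0 := by simpa [h] using sin_sq_add_cos_sq θ
    rw [hfactor, hsin, zero_mul]
  · rw [hfactor, h, sub_self, mul_zero]

theorem exists_fin_eq_of_sin_three_mul_eq_zero {θ : ℝ} (h : sin (3 * θ) = 0) :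
    ∃ (k : Fin 6) (m : ℤ), θ = 2 * π * k / 6 + m * (2 * π) := by
  obtain ⟨n, hn⟩ := sin_eq_zero_iff.mp h
  have hk : ((n % 6).toNat : ℤ) = n % 6 := by omega
  refine ⟨⟨(n % 6).toNat, by omega⟩, n / 6, ?_⟩
  have hn' : (n : ℝ) = (n % 6).toNat + 6 * (n / 6 : ℤ) := by
    exact_mod_cast hk ▸ (Int.emod_add_mul_ediv n 6).symm
  rw [hn'] at hn
  simp only
  linarith

theorem isRegularHexagon_of_inner_sq {P : Set Plane} (hP : 6 ≤ P.encard) {a c : Plane} {r : ℝ}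
    (hr : 0 < r) (ha : dist a c = r) (hPr : ∀ x ∈ P, dist x c = r)
    (hinner : ∀ x ∈ P, inner ℝ (x - c) (a - c) ^ 2 = r ^ 4 ∨
      4 * inner ℝ (x - c) (a - c) ^ 2 = r ^ 4) : IsRegularHexagon P := by
  obtain ⟨φ, hφ⟩ := exists_eq_norm_smul_pt_cos_sin (a - c)
  rw [← dist_eq_norm, ha] at hφ
  set vertex : Fin 6 → Plane := fun k =>
    c + r • pt (cos (φ + 2 * π * k / 6)) (sin (φ + 2 * π * k / 6))
  have hsub : P ⊆ Set.range vertex := by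
    intro x hx
    obtain ⟨α, hα⟩ := exists_eq_norm_smul_pt_cos_sin (x - c)
    rw [← dist_eq_norm, hPr x hx] at hα
    have hcos : inner ℝ (x - c) (a - c) = r ^ 2 * cos (α - φ) := by
      rw [hα, hφ, real_inner_smul_left, real_inner_smul_right, inner_pt_pt, cos_sub]
      ring
    have hcos_sq : cos (α - φ) ^ 2 = 1 ∨ 4 * cos (α - φ) ^ 2 = 1 := by
      have hr₄ : r ^ 4 ≠ 0 := by positivity
      refine (hinner x hx).imp (fun h => ?_) (fun h => ?_) <;>
      · rw [hcos] at h
        exact mul_left_cancel₀ hr₄ (by linear_combination h)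
    obtain ⟨k, m, hkm⟩ :=
      exists_fin_eq_of_sin_three_mul_eq_zero (sin_three_mul_eq_zero_of_cos_sq hcos_sq)
    have hαφ : α = φ + 2 * π * k / 6 + m * (2 * π) := by linarith
    refine ⟨k, ?_⟩
    rw [hαφ, cos_add_int_mul_two_pi, sin_add_int_mul_two_pi] at hα
    exact (eq_add_of_sub_eq' hα).symm
  refine ⟨c, r, φ, hr, (Set.finite_range vertex).eq_of_subset_of_encard_le' hsub ?_⟩
  calc (Set.range vertex).encard ≤ (Set.univ : Set (Fin 6)).encard := by
        rw [← Set.image_univ]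
        exact Set.encard_image_le _ _
    _ = 6 := by simp
    _ ≤ P.encard := hP

end Hexagon

theorem IsEquilateral.isRegularHexagon {P : Set Plane} {v : Fin 3 → Plane} {ρ : ℝ}
    (hv : IsEquilateral v ρ) (hP : 6 ≤ P.encard)
    (hvP : ∀ x ∈ P, ∃ i, x = v i ∨ x = axisPoint v (-1) i) : IsRegularHexagon P := by
  have hsign {x : Plane} (hx : x ∈ P) : ∃ i, ∃ ε : ℝ, |ε| = 1 ∧
      x - center v = ε • (v i - center v) := by
    obtain ⟨i, rfl | rfl⟩ := hvP x hx
    · exact ⟨i, 1, abs_one, (one_smul ℝ _).symm⟩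
    · exact ⟨i, -1, by rw [abs_neg, abs_one], by simp [axisPoint]⟩
  have hradius (i : Fin 3) : dist (v i) (center v) = √ρ := by
    rw [← hv.dist_center_sq i, sqrt_sq dist_nonneg]
  have hρ : √ρ ^ 4 = ρ ^ 2 := by
    rw [show √ρ ^ 4 = (√ρ ^ 2) ^ 2 by ring, sq_sqrt hv.pos.le]
  refine isRegularHexagon_of_inner_sq hP (sqrt_pos.mpr hv.pos) (hradius 0) ?_ ?_ <;> intro x hx <;>
    obtain ⟨i, ε, hε, hxε⟩ := hsign hx
  · rw [dist_eq_norm, hxε, norm_smul, ← dist_eq_norm, hradius, Real.norm_eq_abs, hε, one_mul]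
  · rw [hxε, real_inner_smul_left, hv.inner_sub_center, mul_pow, ← sq_abs ε, hε, hρ]
    split_ifs
    · left; ring
    · right; ring

theorem exists_isEquilateral_of_mem_triangleTypes {X : Type*} [MetricSpace X] {P : Set X} {r : ℝ}
    (h : {r, r, r} ∈ triangleTypes P) :
    ∃ (v : Fin 3 → X) (ρ : ℝ), IsEquilateral v ρ ∧ ∀ i, v i ∈ P := by
  obtain ⟨a, ha, b, hb, c, hc, hab, -, -, heq⟩ := h
  have hside : ∀ d ∈ ({dist a b, dist a c, dist b c} : Multiset ℝ), d = r := by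
    rw [← heq]
    simp
  simp only [Multiset.insert_eq_cons, Multiset.mem_cons, Multiset.mem_singleton, forall_eq_or_imp,
    forall_eq] at hside
  obtain ⟨hrab, hrac, hrbc⟩ := hside
  refine ⟨![a, b, c], r ^ 2 / 3, ⟨?_, fun {i j} hij => ?_⟩, ?_⟩
  · have : 0 < r := hrab ▸ dist_pos.mpr hab
    positivity
  · fin_cases i <;> fin_cases j <;> simp_all [dist_comm, mul_div_cancel₀]
  · simp [Fin.forall_fin_succ, ha, hb, hc]

theorem six_points_three_triangles_regular_hexagon_general (P : Set Plane) (hcard : 6 ≤ P.encard)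
    (h : numTriangles P ≤ 3) : IsRegularHexagon P := by
  have hT := (encard_triangleTypes_le_numTriangles P).trans h
  have hdim : Module.finrank ℝ Plane = 2 := finrank_euclideanSpace_fin
  obtain ⟨r, hr⟩ := exists_equilateral_mem_triangleTypes hdim hcard hT
  obtain ⟨v, ρ, hv, hvP⟩ := exists_isEquilateral_of_mem_triangleTypes hr
  exact hv.isRegularHexagon hcard fun x hx =>
    hv.exists_eq_vertex_or_eq_axisPoint_neg_one hdim hcard hT hvP hx

/-- A set of exactly 6 points in the plane spanning at most 3 distinct triangles
must be the vertex set of a regular hexagon. -/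
theorem six_points_three_triangles_regular_hexagon
    (P : Set Plane) (hcard : P.encard = 6) (h : numTriangles P ≤ 3) :
    IsRegularHexagon P :=
  six_points_three_triangles_regular_hexagon_general P hcard.ge h
end
end

section
/- Let A, C, E, B, D, F be six points forming a convex hexagon with vertices in the cyclic order A, C, E, B, D, F (consecutive vertices are allowed to be collinear). Suppose the distance AB equals the maximum distance between any two of the six points, the unordered triples {A,B,C}, {A,B,D}, {A,B,E}, {A,B,F} are pairwise congruent, and the six points span at most 3 distinct triangles. Then the hexagon ACEBDF is a regular hexagon. -/
open Real EuclideanGeometry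

noncomputable section

/-- The two-dimensional cross product of two vectors in the plane. -/
def cross (u v : Plane) : ℝ := u 0 * v 1 - u 1 * v 0

/-- Six pairwise distinct points, listed in cyclic order, form a convex hexagon
(where consecutive vertices are allowed to be collinear): every vertex lies weakly
on the same side of each directed edge. -/
def IsConvexHexagon (v : Fin 6 → Plane) : Prop :=
  Function.Injective v ∧
    ((∀ i j : Fin 6, 0 ≤ cross (v (i + 1) - v i) (v j - v i)) ∨
      (∀ i j : Fin 6, cross (v (i + 1) - v i) (v j - v i) ≤ 0))

/-!
Identify the plane with `ℂ` so that `A = -1` and `B = 1`. The congruences force `C`, `D`, `E`, `F`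
to be mirror images of one another in the coordinate axes; being distinct, they are the vertices
`z, conj z, -z, -conj z` of a rectangle with sides parallel to the axes. The right triangle
`(z, conj z, -z)` and the isosceles triangles `(1, z, conj z)` and `(-1, z, conj z)` are pairwise
incongruent, so the three classes are exhausted and `(-1, 1, z)` is congruent to one of them.
If it is isosceles, comparing sides gives `z.re ^ 2 = 4` and `z.im ^ 2 = 3`, but then
`(-1, z, -conj z)` lies in a fourth class. So it is right-angled, whence `‖z‖ = 1` and
`z.re ^ 2 = 1 / 4`, and the six points are the sixth roots of unity.
-/

open Complex ComplexConjugate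

section Metric

variable {X Y F : Type*} [PseudoMetricSpace X] [PseudoMetricSpace Y]
  [FunLike F X Y] [DilationClass F X Y]

/-- The multiset of squared side lengths of the triangle `abc`: a congruence invariant of
`{a, b, c}`. Squares make it polynomial in coordinates. -/
def sqSides (a b c : X) : Multiset ℝ := {dist a b ^ 2, dist a c ^ 2, dist b c ^ 2}

/-- The set of all `sqSides` of triangles with pairwise distinct vertices in `P`. Its size bounds
the number of distinct triangles spanned by `P` from below. -/
def triangleSpectrum (P : Set X) : Set (Multiset ℝ) :=
  {s | ∃ a ∈ P, ∃ b ∈ P, ∃ c ∈ P, a ≠ b ∧ a ≠ c ∧ b ≠ c ∧ sqSides a b c = s}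

theorem sqSides_mem_triangleSpectrum {P : Set X} {a b c : X} (ha : a ∈ P) (hb : b ∈ P)
    (hc : c ∈ P) (hab : a ≠ b) (hac : a ≠ c) (hbc : b ≠ c) :
    sqSides a b c ∈ triangleSpectrum P :=
  ⟨a, ha, b, hb, c, hc, hab, hac, hbc, rfl⟩

theorem sqSides_swap_left (a b c : X) : sqSides b a c = sqSides a b c := by
  simp only [sqSides, dist_comm b a, Multiset.insert_eq_cons, ← Multiset.singleton_add]
  abel

theorem sqSides_swap_right (a b c : X) : sqSides a c b = sqSides a b c := by
  simp only [sqSides, dist_comm c b, Multiset.insert_eq_cons, ← Multiset.singleton_add]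
  abel

theorem sqSides_self_left (a b : X) : sqSides a a b = sqSides a b b := by
  simp only [sqSides, dist_self, Multiset.insert_eq_cons, ← Multiset.singleton_add]
  abel

theorem sqSides_eq_of_insert_eq {a b c a' b' c' : X} (h : ({a, b, c} : Set X) = {a', b', c'}) :
    sqSides a b c = sqSides a' b' c' := by
  have hsub : ∀ x ∈ ({a, b, c} : Set X), x ∈ ({a', b', c'} : Set X) := h.subset
  have hsup : ∀ x ∈ ({a', b', c'} : Set X), x ∈ ({a, b, c} : Set X) := h.superset
  simp only [Set.mem_insert_iff, Set.mem_singleton_iff, forall_eq_or_imp, forall_eq] at hsub hsup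
  obtain ⟨rfl | rfl | rfl, rfl | rfl | rfl, rfl | rfl | rfl⟩ := hsub <;>
    grind [sqSides_swap_left, sqSides_swap_right, sqSides_self_left]

theorem sqSides_map (f : F) (a b c : X) :
    sqSides (f a) (f b) (f c) = (sqSides a b c).map ((Dilation.ratio f : ℝ) ^ 2 * ·) := by
  simp [sqSides, Dilation.dist_eq, mul_pow]

theorem map_ratio_sq_mul_injective (f : F) :
    Function.Injective (Multiset.map ((Dilation.ratio f : ℝ) ^ 2 * ·)) :=
  Multiset.map_injective <| mul_right_injective₀ <| by
    exact_mod_cast pow_ne_zero 2 (Dilation.ratio_ne_zero f)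

theorem sqSides_map_inj (f : F) {a b c a' b' c' : X} :
    sqSides (f a) (f b) (f c) = sqSides (f a') (f b') (f c') ↔
      sqSides a b c = sqSides a' b' c' := by
  rw [sqSides_map, sqSides_map, (map_ratio_sq_mul_injective f).eq_iff]

end Metric

section Dilation

variable {X Y F : Type*} [MetricSpace X] [PseudoMetricSpace Y] [FunLike F X Y] [DilationClass F X Y]

theorem triangleSpectrum_image (f : F) (P : Set X) :
    triangleSpectrum (f '' P) =
      Multiset.map ((Dilation.ratio f : ℝ) ^ 2 * ·) '' triangleSpectrum P := by
  ext s
  simp only [triangleSpectrum, Set.mem_image, ne_eq, exists_exists_and_eq_and,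
    (Dilation.injective f).eq_iff, sqSides_map, Set.mem_ofPred_eq, ↓existsAndEq, and_true]
  grind

theorem encard_triangleSpectrum_image (f : F) (P : Set X) :
    (triangleSpectrum (f '' P)).encard = (triangleSpectrum P).encard := by
  rw [triangleSpectrum_image, (map_ratio_sq_mul_injective f).encard_image]

end Dilation

theorem Cong.refl (S : Set Plane) : Cong S S := ⟨IsometryEquiv.refl _, Set.image_id S⟩

theorem Cong.sqSides_eq {a b c a' b' c' : Plane} (h : Cong {a, b, c} {a', b', c'}) :
    sqSides a b c = sqSides a' b' c' := by
  obtain ⟨f, hf⟩ := h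
  have hf' : ({f a, f b, f c} : Set Plane) = {a', b', c'} := by
    rw [← hf, Set.image_insert_eq, Set.image_pair]
  rw [← sqSides_eq_of_insert_eq hf']
  simp only [sqSides, f.dist_eq]

theorem encard_triangleSpectrum_le_numTriangles (P : Set Plane) :
    (triangleSpectrum P).encard ≤ numTriangles P := by
  choose! a ha b hb c hc hab hac hbc hs using fun s (h : s ∈ triangleSpectrum P) => h
  have mem_triples : ∀ s ∈ triangleSpectrum P, ({a s, b s, c s} : Set Plane) ∈ triplesOf P :=
    fun s h => ⟨a s, b s, c s, ha s h, hb s h, hc s h, hab s h, hac s h, hbc s h, rfl⟩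
  refine Set.encard_le_encard_of_injOn (f := fun s => {t ∈ triplesOf P | Cong {a s, b s, c s} t})
    (fun s h => ⟨_, mem_triples s h, rfl⟩) fun s h t ht hst => ?_
  have hcong : Cong {a s, b s, c s} {a t, b t, c t} :=
    (hst.symm.subset ⟨mem_triples t ht, Cong.refl _⟩ : _ ∈ {t' ∈ triplesOf P | _}).2
  rw [← hs s h, ← hs t ht, hcong.sqSides_eq]

theorem sq_dist_eq_re_im (z w : ℂ) :
    dist z w ^ 2 = (z.re - w.re) ^ 2 + (z.im - w.im) ^ 2 := by
  rw [Complex.dist_eq_re_im, Real.sq_sqrt (by positivity)]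

/-- The orbit of `z` under the group generated by the reflections in the real and in the imaginary
axis, i.e. the vertices of a rectangle when `z` is on neither axis. -/
def axisOrbit (z : ℂ) : Finset ℂ := {z, conj z, -z, -conj z}

theorem mem_axisOrbit {z w : ℂ} :
    w ∈ axisOrbit z ↔ (w.re = z.re ∨ w.re = -z.re) ∧ (w.im = z.im ∨ w.im = -z.im) := by
  simp only [axisOrbit, Finset.mem_insert, Finset.mem_singleton, Complex.ext_iff, conj_re, conj_im,
    neg_re, neg_im, neg_neg]
  tauto

theorem card_axisOrbit_le (z : ℂ) : (axisOrbit z).card ≤ 4 := Finset.card_le_four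

theorem re_ne_zero_of_card_axisOrbit {z : ℂ} (hz : (axisOrbit z).card = 4) : z.re ≠ 0 := by
  intro hre
  have hconj : conj z = -z := by simp [Complex.ext_iff, hre]
  have : (axisOrbit z).card ≤ 2 := by
    simpa [axisOrbit, hconj] using Finset.card_le_two (a := -z) (b := z)
  lia

theorem im_ne_zero_of_card_axisOrbit {z : ℂ} (hz : (axisOrbit z).card = 4) : z.im ≠ 0 := by
  intro him
  have hconj : conj z = z := by simp [Complex.ext_iff, him]
  have : (axisOrbit z).card ≤ 2 := by
    simpa [axisOrbit, hconj] using Finset.card_le_two (a := z) (b := -z)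
  lia

theorem eq_or_eq_or_eq_of_triple_eq {α : Type*} {a b c a' b' c' : α}
    (h : ({a, b, c} : Multiset α) = {a', b', c'}) :
    (a = a' ∨ a = b' ∨ a = c') ∧ (b = a' ∨ b = b' ∨ b = c') ∧ (c = a' ∨ c = b' ∨ c = c') := by
  have hmem : ∀ x ∈ ({a, b, c} : Multiset α), x ∈ ({a', b', c'} : Multiset α) := fun x hx => h ▸ hx
  simpa using hmem

theorem sum_eq_of_triple_eq {α : Type*} [AddCommMonoid α] {a b c a' b' c' : α}
    (h : ({a, b, c} : Multiset α) = {a', b', c'}) : a + (b + c) = a' + (b' + c') := by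
  simpa using congrArg Multiset.sum h

theorem sqSides_neg_one_one {e : ℝ} (he : e = 1 ∨ e = -1) (z : ℂ) :
    sqSides (-1) 1 z = {4, (z.re - e) ^ 2 + z.im ^ 2, (z.re + e) ^ 2 + z.im ^ 2} := by
  have h : sqSides (-1) 1 z = {4, (z.re + 1) ^ 2 + z.im ^ 2, (z.re - 1) ^ 2 + z.im ^ 2} := by
    simp only [sqSides, sq_dist_eq_re_im, neg_re, neg_im, one_re, one_im]
    ring_nf
  rcases he with rfl | rfl
  · exact h.trans (congrArg (4 ::ₘ ·) (Multiset.pair_comm _ _))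
  · rw [h, sub_neg_eq_add, ← sub_eq_add_neg]

theorem mem_axisOrbit_of_sqSides_eq {z w : ℂ} (h : sqSides (-1) 1 z = sqSides (-1) 1 w) :
    w ∈ axisOrbit z := by
  rw [sqSides_neg_one_one (.inl rfl), sqSides_neg_one_one (.inl rfl)] at h
  replace h := (Multiset.cons_inj_right 4).1 h
  have hmem := Multiset.mem_of_le h.le (Multiset.mem_cons_self _ _)
  have hsum := congrArg Multiset.sum h
  simp only [Multiset.insert_eq_cons, Multiset.mem_cons, Multiset.mem_singleton,
    Multiset.sum_cons, Multiset.sum_singleton] at hmem hsum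
  have hre : w.re ^ 2 = z.re ^ 2 := by grind
  have him : w.im ^ 2 = z.im ^ 2 := by linarith
  exact mem_axisOrbit.2 ⟨sq_eq_sq_iff_eq_or_eq_neg.1 hre, sq_eq_sq_iff_eq_or_eq_neg.1 him⟩

theorem sqSides_ofReal_conj (e : ℝ) (z : ℂ) :
    sqSides (e : ℂ) z (conj z) =
      {(z.re - e) ^ 2 + z.im ^ 2, (z.re - e) ^ 2 + z.im ^ 2, 4 * z.im ^ 2} := by
  simp only [sqSides, sq_dist_eq_re_im, ofReal_re, ofReal_im, conj_re, conj_im]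
  ring_nf

theorem sqSides_conj_neg (z : ℂ) :
    sqSides z (conj z) (-z) = {4 * z.im ^ 2, 4 * (z.re ^ 2 + z.im ^ 2), 4 * z.re ^ 2} := by
  simp only [sqSides, sq_dist_eq_re_im, neg_re, neg_im, conj_re, conj_im]
  ring_nf

theorem sum_sqSides_neg_one_neg_conj (z : ℂ) :
    (sqSides (-1) z (-conj z)).sum = 6 * z.re ^ 2 + 2 * z.im ^ 2 + 2 := by
  simp only [sqSides, sq_dist_eq_re_im, Multiset.insert_eq_cons, Multiset.sum_cons,
    Multiset.sum_singleton, neg_re, neg_im, conj_re, conj_im, one_re, one_im]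
  ring

theorem sqSides_ofReal_conj_ne_neg {e : ℝ} {z : ℂ} (he : e ≠ 0) (hre : z.re ≠ 0) :
    sqSides (e : ℂ) z (conj z) ≠ sqSides ((-e : ℝ) : ℂ) z (conj z) := by
  rw [sqSides_ofReal_conj, sqSides_ofReal_conj]
  intro h
  have hsum := sum_eq_of_triple_eq h
  exact mul_ne_zero hre he (by linarith)

theorem sqSides_conj_neg_ne_ofReal_conj {z : ℂ} (hre : z.re ≠ 0) (him : z.im ≠ 0) (e : ℝ) :
    sqSides z (conj z) (-z) ≠ sqSides (e : ℂ) z (conj z) := by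
  rw [sqSides_conj_neg, sqSides_ofReal_conj]
  intro h
  have hsum := sum_eq_of_triple_eq h
  obtain ⟨-, hhyp | hhyp | hhyp, -⟩ := eq_or_eq_or_eq_of_triple_eq h
  · exact him (by nlinarith)
  · exact him (by nlinarith)
  · exact hre (by nlinarith)

theorem sq_re_im_of_sqSides_eq_ofReal_conj {z : ℂ} {e : ℝ} (he : e = 1 ∨ e = -1) (hre : z.re ≠ 0)
    (him : z.im ≠ 0) (h : sqSides (-1) 1 z = sqSides (e : ℂ) z (conj z)) :
    z.re ^ 2 = 4 ∧ z.im ^ 2 = 3 := by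
  rw [sqSides_neg_one_one he, sqSides_ofReal_conj] at h
  have hsum := sum_eq_of_triple_eq h
  obtain ⟨-, -, hside⟩ := eq_or_eq_or_eq_of_triple_eq h
  have hbase : (z.re + e) ^ 2 + z.im ^ 2 = 4 * z.im ^ 2 := by grind
  have hleg : (z.re - e) ^ 2 + z.im ^ 2 = 4 := by linarith
  have he_sq : e ^ 2 = 1 := sq_eq_one_iff.2 he
  have hfactor : (z.re - 2 * e) * (z.re + e) = 0 := by
    linear_combination (hbase + 3 * hleg) / 4 - 3 * he_sq
  rcases mul_eq_zero.1 hfactor with hx | hx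
  · rw [sub_eq_zero.1 hx] at hleg ⊢
    exact ⟨by linear_combination 4 * he_sq, by linear_combination hleg - he_sq⟩
  · have him_sq : z.im ^ 2 = 0 := by linear_combination (z.re + e) / 3 * hx - hbase / 3
    exact absurd him_sq (pow_ne_zero 2 him)

theorem sq_re_im_of_sqSides_eq_conj_neg {z : ℂ} (him : z.im ≠ 0)
    (h : sqSides (-1) 1 z = sqSides z (conj z) (-z)) :
    z.re ^ 2 = 1 / 4 ∧ z.im ^ 2 = 3 / 4 := by
  rw [sqSides_neg_one_one (.inl rfl), sqSides_conj_neg] at h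
  have hsum := sum_eq_of_triple_eq h
  obtain ⟨-, -, hwidth⟩ := eq_or_eq_or_eq_of_triple_eq h.symm
  have hcircle : z.re ^ 2 + z.im ^ 2 = 1 := by linarith
  have hre_ne : z.re ^ 2 ≠ 1 := fun hre => him (by nlinarith)
  have hprod : (z.re ^ 2 - 1) * (4 * z.re ^ 2 - 1) = 0 := by
    rcases hwidth with hw | hw | hw
    · linear_combination (4 * z.re ^ 2 - 1) / 4 * hw
    · linear_combination (z.re - 1) * (2 * z.re + 1) / 2 * (hw + hcircle)
    · linear_combination (z.re + 1) * (2 * z.re - 1) / 2 * (hw + hcircle)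
  have hre : z.re ^ 2 = 1 / 4 := by
    linarith [(mul_eq_zero.1 hprod).resolve_left (sub_ne_zero.2 hre_ne)]
  exact ⟨hre, by linarith⟩

/-- The hexagon with opposite vertices `-1` and `1` whose four other vertices are the mirror images
of `z` in the axes: the normal form of the hexagons in the theorem. -/
def axisHexagon (z : ℂ) : Finset ℂ := insert (-1) (insert 1 (axisOrbit z))

theorem triangleSpectrum_axisHexagon {z : ℂ} (hre : z.re ≠ 0) (him : z.im ≠ 0)
    (h : (triangleSpectrum (axisHexagon z : Set ℂ)).encard ≤ 3) :
    triangleSpectrum (axisHexagon z : Set ℂ) =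
      {sqSides z (conj z) (-z), sqSides ((1 : ℝ) : ℂ) z (conj z),
        sqSides ((-1 : ℝ) : ℂ) z (conj z)} := by
  set T : Set (Multiset ℝ) := {sqSides z (conj z) (-z), sqSides ((1 : ℝ) : ℂ) z (conj z),
    sqSides ((-1 : ℝ) : ℂ) z (conj z)}
  have hcard : T.encard = 3 := Set.encard_eq_three.2
    ⟨_, _, _, sqSides_conj_neg_ne_ofReal_conj hre him 1, sqSides_conj_neg_ne_ofReal_conj hre him _,
      sqSides_ofReal_conj_ne_neg one_ne_zero hre, rfl⟩
  have hsub : T ⊆ triangleSpectrum (axisHexagon z : Set ℂ) := by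
    have hz : z ∈ (axisHexagon z : Set ℂ) := by simp [axisHexagon, axisOrbit]
    have hz' : conj z ∈ (axisHexagon z : Set ℂ) := by simp [axisHexagon, axisOrbit]
    have hconj : z ≠ conj z := by grind [conj_im]
    have hne (e : ℝ) : (e : ℂ) ≠ z ∧ (e : ℂ) ≠ conj z := by grind [ofReal_im, conj_im]
    rintro s (rfl | rfl | rfl)
    · exact sqSides_mem_triangleSpectrum hz hz' (by simp [axisHexagon, axisOrbit]) hconj
        (by grind [neg_im]) (by grind [conj_re, neg_re])
    · exact sqSides_mem_triangleSpectrum (by simp [axisHexagon]) hz hz' (hne _).1 (hne _).2 hconj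
    · exact sqSides_mem_triangleSpectrum (by simp [axisHexagon]) hz hz' (hne _).1 (hne _).2 hconj
  exact (Set.Finite.eq_of_subset_of_encard_le (Set.finite_of_encard_eq_coe hcard) hsub
    (h.trans hcard.ge)).symm

theorem sq_re_im_ne_of_encard_triangleSpectrum_le {z : ℂ}
    (h : (triangleSpectrum (axisHexagon z : Set ℂ)).encard ≤ 3) :
    ¬(z.re ^ 2 = 4 ∧ z.im ^ 2 = 3) := by
  rintro ⟨hre_sq, him_sq⟩
  have hre : z.re ≠ 0 := by grind
  have him : z.im ≠ 0 := by grind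
  have hmem : sqSides (-1) z (-conj z) ∈ triangleSpectrum (axisHexagon z : Set ℂ) :=
    sqSides_mem_triangleSpectrum (by simp [axisHexagon]) (by simp [axisHexagon, axisOrbit])
      (by simp [axisHexagon, axisOrbit]) (by grind [neg_im, one_im])
      (by grind [neg_im, conj_im, one_im]) (by grind [neg_re, conj_re])
  have hsum : (sqSides (-1) z (-conj z)).sum = 32 := by
    rw [sum_sqSides_neg_one_neg_conj, hre_sq, him_sq]
    norm_num
  rw [triangleSpectrum_axisHexagon hre him h, sqSides_conj_neg, sqSides_ofReal_conj,
    sqSides_ofReal_conj, Set.mem_insert_iff, Set.mem_insert_iff, Set.mem_singleton_iff] at hmem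
  rcases hmem with hmem | hmem | hmem <;>
  · simp only [hmem, Multiset.insert_eq_cons, Multiset.sum_cons, Multiset.sum_singleton] at hsum
    grind

theorem sq_re_im_of_encard_triangleSpectrum_le {z : ℂ} (hre : z.re ≠ 0) (him : z.im ≠ 0)
    (h : (triangleSpectrum (axisHexagon z : Set ℂ)).encard ≤ 3) :
    z.re ^ 2 = 1 / 4 ∧ z.im ^ 2 = 3 / 4 := by
  have hmem : sqSides (-1) 1 z ∈ triangleSpectrum (axisHexagon z : Set ℂ) :=
    sqSides_mem_triangleSpectrum (by simp [axisHexagon]) (by simp [axisHexagon])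
      (by simp [axisHexagon, axisOrbit]) (by norm_num) (by grind [neg_im, one_im])
      (by grind [one_im])
  rw [triangleSpectrum_axisHexagon hre him h] at hmem
  rcases hmem with hmem | hmem | hmem
  · exact sq_re_im_of_sqSides_eq_conj_neg him hmem
  · exact absurd (sq_re_im_of_sqSides_eq_ofReal_conj (.inl rfl) hre him hmem)
      (sq_re_im_ne_of_encard_triangleSpectrum_le h)
  · exact absurd (sq_re_im_of_sqSides_eq_ofReal_conj (.inr rfl) hre him hmem)
      (sq_re_im_ne_of_encard_triangleSpectrum_le h)

theorem pow_six_eq_one {z : ℂ} (hre : z.re ^ 2 = 1 / 4) (him : z.im ^ 2 = 3 / 4) : z ^ 6 = 1 := by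
  -- `z ^ 2` is a root of `w ^ 2 + w + 1`, hence a primitive cube root of unity.
  have hroot : (z ^ 2) ^ 2 + z ^ 2 + 1 = 0 := by
    apply Complex.ext
    · simp only [pow_two, add_re, mul_re, mul_im, one_re, zero_re]
      grind
    · simp only [pow_two, add_im, mul_re, mul_im, one_im, zero_im]
      grind
  linear_combination (z ^ 2 - 1) * hroot

theorem axisHexagon_eq_nthRootsFinset {z : ℂ} (hz : (axisOrbit z).card = 4) (hpow : z ^ 6 = 1) :
    axisHexagon z = Polynomial.nthRootsFinset 6 1 := by
  refine Finset.eq_of_subset_of_card_le (fun w hw => ?_) ?_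
  · rw [Polynomial.mem_nthRootsFinset (by norm_num)]
    simp only [axisHexagon, axisOrbit, Finset.mem_insert, Finset.mem_singleton] at hw
    have hconj : conj z ^ 6 = 1 := by rw [← map_pow, hpow, map_one]
    have hneg (u : ℂ) : (-u) ^ 6 = u ^ 6 := Even.neg_pow (by decide) u
    rcases hw with rfl | rfl | rfl | rfl | rfl | rfl
    exacts [(hneg 1).trans (one_pow 6), one_pow 6, hpow, hconj, (hneg _).trans hpow,
      (hneg _).trans hconj]
  · have him := im_ne_zero_of_card_axisOrbit hz
    have hone : 1 ∉ axisOrbit z := by grind [mem_axisOrbit, one_im]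
    have hneg : -1 ∉ insert 1 (axisOrbit z) := by
      rw [Finset.mem_insert, mem_axisOrbit]
      grind [neg_im, one_im]
    rw [(Complex.isPrimitiveRoot_exp 6 (by norm_num)).card_nthRootsFinset, axisHexagon,
      Finset.card_insert_of_notMem hneg, Finset.card_insert_of_notMem hone, hz]

theorem coe_nthRootsFinset_eq_range_exp (n : ℕ) [NeZero n] :
    (Polynomial.nthRootsFinset n (1 : ℂ) : Set ℂ) =
      Set.range fun k : Fin n => Complex.exp ((2 * π * k / n : ℝ) * I) := by
  have hprim := Complex.isPrimitiveRoot_exp n (NeZero.ne n)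
  have hpow (k : ℕ) : Complex.exp (2 * π * I / n) ^ k = Complex.exp ((2 * π * k / n : ℝ) * I) := by
    rw [← Complex.exp_nat_mul]
    push_cast
    ring_nf
  ext z
  rw [Finset.mem_coe, Polynomial.mem_nthRootsFinset (NeZero.pos n)]
  constructor
  · intro hz
    obtain ⟨k, hk, rfl⟩ := hprim.eq_pow_of_pow_eq_one hz
    exact ⟨⟨k, hk⟩, (hpow k).symm⟩
  · rintro ⟨k, rfl⟩
    beta_reduce
    rw [← hpow, pow_right_comm, hprim.pow_eq_one, one_pow]

/-- The similarity `z ↦ u * z + m` of the complex plane, followed by the identification of `ℂ` with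
`Plane`. It is used to place the diagonal `AB` of the hexagon at `-1, 1`. -/
def frame (m : ℂ) {u : ℂ} (hu : u ≠ 0) : ℂ ≃ᵈ Plane :=
  (DilationEquiv.smulTorsor m hu).trans
    Complex.orthonormalBasisOneI.repr.toIsometryEquiv.toDilationEquiv

theorem frame_apply (m : ℂ) {u : ℂ} (hu : u ≠ 0) (z : ℂ) :
    frame m hu z = Complex.orthonormalBasisOneI.repr (u * z + m) := rfl

theorem exists_frame {A B : Plane} (hAB : A ≠ B) :
    ∃ (m u : ℂ) (hu : u ≠ 0), frame m hu (-1) = A ∧ frame m hu 1 = B := by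
  obtain ⟨a, rfl⟩ := Complex.orthonormalBasisOneI.repr.surjective A
  obtain ⟨b, rfl⟩ := Complex.orthonormalBasisOneI.repr.surjective B
  have hab : b - a ≠ 0 := sub_ne_zero.2 fun h => hAB (h ▸ rfl)
  refine ⟨(a + b) / 2, (b - a) / 2, div_ne_zero hab two_ne_zero, ?_, ?_⟩ <;>
  · rw [frame_apply]
    ring_nf

theorem frame_exp (m : ℂ) {u : ℂ} (hu : u ≠ 0) (θ : ℝ) :
    frame m hu (Complex.exp (θ * I)) =
      pt m.re m.im + ‖u‖ • pt (Real.cos (u.arg + θ)) (Real.sin (u.arg + θ)) := by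
  have hpolar : u * Complex.exp (θ * I) = ‖u‖ * Complex.exp ((u.arg + θ : ℝ) * I) := by
    conv_lhs => rw [← Complex.norm_mul_exp_arg_mul_I u]
    rw [mul_assoc, ← Complex.exp_add]
    push_cast
    ring_nf
  rw [frame_apply, hpolar, add_comm]
  ext i
  fin_cases i
  · simp [pt, -ofReal_add, Complex.exp_ofReal_mul_I_re]
  · simp [pt, -ofReal_add, Complex.exp_ofReal_mul_I_im]

theorem isRegularHexagon_frame_image_nthRootsFinset (m : ℂ) {u : ℂ} (hu : u ≠ 0) :
    IsRegularHexagon (frame m hu '' Polynomial.nthRootsFinset 6 (1 : ℂ)) := by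
  refine ⟨pt m.re m.im, ‖u‖, u.arg, norm_pos_iff.2 hu, ?_⟩
  rw [coe_nthRootsFinset_eq_range_exp, ← Set.range_comp]
  simp only [Function.comp_def, frame_exp, Nat.cast_ofNat]

theorem isRegularHexagon_frame_image_axisHexagon {m u z : ℂ} (hu : u ≠ 0)
    (hz : (axisOrbit z).card = 4) (hspan : numTriangles (frame m hu '' axisHexagon z) ≤ 3) :
    IsRegularHexagon (frame m hu '' axisHexagon z) := by
  have hspec : (triangleSpectrum (axisHexagon z : Set ℂ)).encard ≤ 3 := by
    rw [← encard_triangleSpectrum_image (frame m hu)]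
    exact (encard_triangleSpectrum_le_numTriangles _).trans hspan
  obtain ⟨hre, him⟩ := sq_re_im_of_encard_triangleSpectrum_le
    (re_ne_zero_of_card_axisOrbit hz) (im_ne_zero_of_card_axisOrbit hz) hspec
  rw [axisHexagon_eq_nthRootsFinset hz (pow_six_eq_one hre him)]
  exact isRegularHexagon_frame_image_nthRootsFinset m hu

theorem mem_axisOrbit_of_cong {m u c d : ℂ} (hu : u ≠ 0)
    (h : Cong {frame m hu (-1), frame m hu 1, frame m hu c}
      {frame m hu (-1), frame m hu 1, frame m hu d}) : d ∈ axisOrbit c :=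
  mem_axisOrbit_of_sqSides_eq ((sqSides_map_inj (frame m hu)).1 h.sqSides_eq)

theorem axisOrbit_eq_of_card_eq_four {c d e f : ℂ} (hd : d ∈ axisOrbit c) (he : e ∈ axisOrbit c)
    (hf : f ∈ axisOrbit c) (hcard : ({c, d, e, f} : Finset ℂ).card = 4) :
    axisOrbit c = {c, d, e, f} := by
  refine (Finset.eq_of_subset_of_card_le ?_ (hcard ▸ card_axisOrbit_le c)).symm
  simp [Finset.insert_subset_iff, hd, he, hf, mem_axisOrbit]

theorem hexagon_regularizer_general {A C E B D F : Plane} (hnodup : [A, C, E, B, D, F].Nodup)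
    (hD : Cong {A, B, C} {A, B, D}) (hE : Cong {A, B, C} {A, B, E})
    (hF : Cong {A, B, C} {A, B, F}) (hspan : numTriangles {A, C, E, B, D, F} ≤ 3) :
    IsRegularHexagon {A, C, E, B, D, F} := by
  obtain ⟨m, u, hu, rfl, rfl⟩ := exists_frame (show A ≠ B by grind)
  obtain ⟨c, rfl⟩ := (frame m hu).surjective C
  obtain ⟨d, rfl⟩ := (frame m hu).surjective D
  obtain ⟨e, rfl⟩ := (frame m hu).surjective E
  obtain ⟨f, rfl⟩ := (frame m hu).surjective F
  have hnodup' : [-1, c, e, 1, d, f].Nodup := List.Nodup.of_map (frame m hu) hnodup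
  have hcard : ({c, d, e, f} : Finset ℂ).card = 4 := by grind
  have horbit : axisOrbit c = {c, d, e, f} :=
    axisOrbit_eq_of_card_eq_four (mem_axisOrbit_of_cong hu hD) (mem_axisOrbit_of_cong hu hE)
      (mem_axisOrbit_of_cong hu hF) hcard
  have hvertices : (axisHexagon c : Set ℂ) = {-1, c, e, 1, d, f} := by
    simp only [axisHexagon, horbit, Finset.coe_insert, Finset.coe_singleton]
    grind
  have himage : ({frame m hu (-1), frame m hu c, frame m hu e, frame m hu 1, frame m hu d,
      frame m hu f} : Set Plane) = frame m hu '' axisHexagon c := by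
    simp only [hvertices, Set.image_insert_eq, Set.image_singleton]
  rw [himage] at hspan ⊢
  exact isRegularHexagon_frame_image_axisHexagon hu (horbit ▸ hcard) hspan

/-- If `ACEBDF` is a convex hexagon (in that cyclic vertex order) spanning at most
three distinct triangles, `AB` realizes the maximal distance between the six points,
and the triples `{A,B,C}`, `{A,B,D}`, `{A,B,E}`, `{A,B,F}` are pairwise congruent,
then `ACEBDF` is a regular hexagon. -/
theorem hexagon_regularizer (A C E B D F : Plane)
    (hconv : IsConvexHexagon ![A, C, E, B, D, F])
    (hdiam : ∀ p ∈ ({A, C, E, B, D, F} : Set Plane), ∀ q ∈ ({A, C, E, B, D, F} : Set Plane),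
      dist p q ≤ dist A B)
    (hC : Cong {A, B, C} {A, B, D})
    (hD : Cong {A, B, C} {A, B, E})
    (hE : Cong {A, B, C} {A, B, F})
    (hspan : numTriangles {A, C, E, B, D, F} ≤ 3) :
    IsRegularHexagon {A, C, E, B, D, F} :=
  hexagon_regularizer_general (List.nodup_ofFn.2 hconv.1) hC hD hE hspan
end
end
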